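/- arXiv:1907.07436 — 2 statements merged into one kernel-verified Lean document; each statement's English description precedes it below -/
import Mathlib

section
/- Let Ω ⊆ ℝⁿ be an open set, F : Ω → ℝⁿ a continuous vector field and V : Ω → ℝ continuous. The following are equivalent: (iii) V is a viscosity supersolution of F(x)·∇V(x) ≥ 0 in Ω, i.e. for every C¹ function φ : Ω → ℝ and every point x₀ ∈ Ω at which V − φ attains a local minimum one has F(x₀)·∇φ(x₀) ≥ 0; (iv) the pair (V,F) is backward weakly increasing, i.e. for every x₀ ∈ Ω there exist ε > 0 and a C¹ curve x : (−ε,0] → Ω with x(0) = x₀, ẋ(t) = F(x(t)) for all t ∈ (−ε,0], and V(x(s)) ≤ V(x(t)) whenever −ε < s ≤ t ≤ 0. -/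
open Set
open scoped RealInnerProductSpace

/-!
Testing the supersolution property with `φ p = -‖p - x‖² / (2τ)` shows that
`0 ≤ ⟪F y, x - y⟫` at every proximal point `y` of `x`, a minimizer of `p ↦ V p + ‖p - x‖² / (2τ)`.
Hence an explicit Euler step `x ↦ x - h • F y` raises the minimal value (the Moreau envelope of `V`
at `x`) by at most `h² ‖F y‖² / (2τ)`. With `h = τ²` the accumulated error over a bounded time
is `O(τ)`, and as `τ → 0` the Euler scheme for the field `x ↦ -F y` converges, along an ultrafilter,
to a solution of `x' = -F x` along which `V` does not increase; reversing time gives the curve.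
Conversely, if `V - φ` has a local minimum at `x 0` and `V` is monotone along the curve `x`, then
`φ ∘ x` has a one-sided local maximum at time `0`.
-/

section

open Filter Topology Metric

section EulerScheme

theorem hasDerivWithinAt_of_straddle {E : Type*} [NormedAddCommGroup E] [NormedSpace ℝ E]
    {x : ℝ → E} {v : E} {s : Set ℝ} {t : ℝ} (ht : t ∈ s)
    (hx : ∀ ε > 0, ∃ δ > 0, ∀ a ∈ s, ∀ b ∈ s, a ≤ t → t ≤ b → b - a < δ →
      ‖x b - x a - (b - a) • v‖ ≤ ε * (b - a)) :
    HasDerivWithinAt x v s t := by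
  rw [hasDerivWithinAt_iff_isLittleO, Asymptotics.isLittleO_iff]
  intro ε hε
  obtain ⟨δ, hδ, hxδ⟩ := hx ε hε
  filter_upwards [self_mem_nhdsWithin, mem_nhdsWithin_of_mem_nhds (ball_mem_nhds t hδ)]
    with u hu hut
  rw [mem_ball, Real.dist_eq, abs_lt] at hut
  rcases le_total t u with htu | htu
  · rw [Real.norm_of_nonneg (sub_nonneg.2 htu)]
    exact hxδ t ht u hu le_rfl htu hut.2
  · have hswap : x u - x t - (u - t) • v = -(x t - x u - (t - u) • v) := by module
    rw [Real.norm_of_nonpos (sub_nonpos.2 htu), hswap, norm_neg, neg_sub]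
    exact hxδ u hu t ht htu le_rfl (by linarith)

theorem tendsto_floor_div_mul_nhdsGT_zero {ι : Type*} {l : Filter ι} {h : ι → ℝ}
    (hh : Tendsto h l (𝓝[>] 0)) {t : ℝ} (ht : 0 ≤ t) :
    Tendsto (fun i => (⌊t / h i⌋₊ : ℝ) * h i) l (𝓝 t) := by
  simpa [Function.comp_def, div_eq_mul_inv] using
    (tendsto_nat_floor_mul_div_atTop ht).comp hh.inv_tendsto_nhdsGT_zero

theorem tendsto_sq_nhdsGT_zero : Tendsto (fun τ : ℝ => τ ^ 2) (𝓝[>] 0) (𝓝[>] 0) := by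
  have hsq : Tendsto (fun τ : ℝ => τ ^ 2) (𝓝 0) (𝓝 0) :=
    Continuous.tendsto' (by fun_prop) _ _ (by simp)
  refine tendsto_nhdsWithin_iff.2 ⟨hsq.mono_left nhdsWithin_le_nhds, ?_⟩
  filter_upwards [self_mem_nhdsWithin] with τ hτ using pow_pos (mem_Ioi.1 hτ) 2

variable {E : Type*} [NormedAddCommGroup E] [NormedSpace ℝ E]

/-- The explicit Euler iterates of step `h` for `x' = G x` started at `c`. -/
def eulerSeq (G : E → E) (h : ℝ) (c : E) (k : ℕ) : E :=
  (fun x => x + h • G x)^[k] c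

/-- The piecewise constant Euler approximation at time `t`; it is `c` for `t < 0`, as `⌊·⌋₊`
truncates. -/
noncomputable def eulerApprox (G : E → E) (h : ℝ) (c : E) (t : ℝ) : E :=
  eulerSeq G h c ⌊t / h⌋₊

theorem eulerSeq_succ (G : E → E) (h : ℝ) (c : E) (k : ℕ) :
    eulerSeq G h c (k + 1) = eulerSeq G h c k + h • G (eulerSeq G h c k) :=
  Function.iterate_succ_apply' _ _ _

theorem norm_eulerSeq_sub_sub_smul_le {G : E → E} {h ε : ℝ} {c v : E} (hh : 0 ≤ h) {j k : ℕ}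
    (hjk : j ≤ k) (hG : ∀ i, j ≤ i → i < k → ‖G (eulerSeq G h c i) - v‖ ≤ ε) :
    ‖eulerSeq G h c k - eulerSeq G h c j - (((k : ℝ) - j) * h) • v‖ ≤ ε * (((k : ℝ) - j) * h) := by
  induction k, hjk using Nat.le_induction with
  | base => simp
  | succ k hjk ih =>
    have hsplit : eulerSeq G h c (k + 1) - eulerSeq G h c j - (((k + 1 : ℕ) - j : ℝ) * h) • v =
        (eulerSeq G h c k - eulerSeq G h c j - (((k : ℝ) - j) * h) • v) +
          h • (G (eulerSeq G h c k) - v) := by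
      rw [eulerSeq_succ]; push_cast; module
    calc _ ≤ ‖eulerSeq G h c k - eulerSeq G h c j - (((k : ℝ) - j) * h) • v‖ +
          ‖h • (G (eulerSeq G h c k) - v)‖ := hsplit ▸ norm_add_le _ _
      _ ≤ ε * (((k : ℝ) - j) * h) + h * ε := by
        rw [norm_smul, Real.norm_of_nonneg hh]
        gcongr
        · exact ih fun i hji hik => hG i hji (hik.trans k.lt_succ_self)
        · exact hG k hjk k.lt_succ_self
      _ = _ := by push_cast; ring

theorem norm_eulerSeq_sub_le {G : E → E} {h M : ℝ} {c : E} (hh : 0 ≤ h) (hM : ∀ y, ‖G y‖ ≤ M)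
    {j k : ℕ} (hjk : j ≤ k) :
    ‖eulerSeq G h c k - eulerSeq G h c j‖ ≤ M * (((k : ℝ) - j) * h) := by
  simpa using norm_eulerSeq_sub_sub_smul_le (v := (0 : E)) hh hjk fun i _ _ =>
    (congrArg norm (sub_zero _)).trans_le (hM _)

theorem eulerSeq_mem_closedBall {G : E → E} {h M : ℝ} {c : E} (hh : 0 ≤ h)
    (hM : ∀ y, ‖G y‖ ≤ M) (k : ℕ) : eulerSeq G h c k ∈ closedBall c (M * (k * h)) := by
  rw [mem_closedBall_iff_norm]
  simpa [eulerSeq] using norm_eulerSeq_sub_le (c := c) hh hM k.zero_le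

theorem floor_div_mul_le_abs {h : ℝ} (hh : 0 < h) (t : ℝ) : (⌊t / h⌋₊ : ℝ) * h ≤ |t| := by
  rw [← le_div_iff₀ hh]
  calc (⌊t / h⌋₊ : ℝ) ≤ ⌊|t| / h⌋₊ := by gcongr; exact le_abs_self t
    _ ≤ |t| / h := Nat.floor_le (by positivity)

theorem eulerApprox_mem_closedBall {G : E → E} {h M : ℝ} {c : E} (hh : 0 < h)
    (hM : ∀ y, ‖G y‖ ≤ M) (t : ℝ) : eulerApprox G h c t ∈ closedBall c (M * |t|) := by
  have hM₀ : 0 ≤ M := (norm_nonneg _).trans (hM c)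
  refine closedBall_subset_closedBall ?_ (eulerSeq_mem_closedBall hh.le hM _)
  gcongr
  exact floor_div_mul_le_abs hh t

section Limit

variable {ι : Type*} {G : ι → E → E} {h : ι → ℝ} {c : E} {M : ℝ}

theorem exists_tendsto_eulerApprox [ProperSpace E] (U : Ultrafilter ι)
    (hM : ∀ i y, ‖G i y‖ ≤ M) (hh : ∀ᶠ i in U, 0 < h i) :
    ∃ x : ℝ → E, (∀ t, x t ∈ closedBall c (M * |t|)) ∧
      ∀ t, Tendsto (fun i => eulerApprox (G i) (h i) c t) U (𝓝 (x t)) := by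
  have hlim (t : ℝ) : ∃ p ∈ closedBall c (M * |t|),
      Tendsto (fun i => eulerApprox (G i) (h i) c t) U (𝓝 p) :=
    (isCompact_closedBall c (M * |t|)).ultrafilter_le_nhds'
      (U.map fun i => eulerApprox (G i) (h i) c t)
      (hh.mono fun i hi => eulerApprox_mem_closedBall hi (hM i) t)
  choose x hx using hlim
  exact ⟨x, fun t => (hx t).1, fun t => (hx t).2⟩

variable {l : Filter ι} [l.NeBot]

theorem norm_sub_sub_smul_le_of_tendsto_eulerApprox (hM : ∀ i y, ‖G i y‖ ≤ M)
    (hh : Tendsto h l (𝓝[>] 0)) {a b : ℝ} (ha : 0 ≤ a) (hab : a ≤ b) {p q v : E}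
    (hp : Tendsto (fun i => eulerApprox (G i) (h i) c a) l (𝓝 p))
    (hq : Tendsto (fun i => eulerApprox (G i) (h i) c b) l (𝓝 q)) {ε ρ : ℝ} (hρ : 0 < ρ)
    (hG : ∀ᶠ i in l, ∀ y ∈ ball p (M * (b - a) + ρ), ‖G i y - v‖ ≤ ε) :
    ‖q - p - (b - a) • v‖ ≤ ε * (b - a) := by
  have helapsed : Tendsto (fun i => ((⌊b / h i⌋₊ : ℝ) - ⌊a / h i⌋₊) * h i) l (𝓝 (b - a)) := by
    simpa only [sub_mul] using (tendsto_floor_div_mul_nhdsGT_zero hh (ha.trans hab)).sub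
      (tendsto_floor_div_mul_nhdsGT_zero hh ha)
  refine le_of_tendsto_of_tendsto ((hq.sub hp).sub (helapsed.smul_const v)).norm
    (helapsed.const_mul ε) ?_
  filter_upwards [hG, hh.eventually self_mem_nhdsWithin,
    hp.eventually (ball_mem_nhds p (half_pos hρ)),
    (helapsed.const_mul M).eventually_lt_const (lt_add_of_pos_right _ (half_pos hρ))]
    with i hGi hhi hpi hMi
  refine norm_eulerSeq_sub_sub_smul_le hhi.le (Nat.floor_mono (by gcongr)) fun k hak hkb => ?_
  refine hGi _ ?_
  have hM₀ : 0 ≤ M := (norm_nonneg _).trans (hM i p)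
  calc dist (eulerSeq (G i) (h i) c k) p
      ≤ dist (eulerSeq (G i) (h i) c k) (eulerApprox (G i) (h i) c a) +
        dist (eulerApprox (G i) (h i) c a) p := dist_triangle _ _ _
    _ ≤ M * (((k : ℝ) - ⌊a / h i⌋₊) * h i) + dist (eulerApprox (G i) (h i) c a) p := by
      rw [dist_eq_norm]
      gcongr
      exact norm_eulerSeq_sub_le hhi.le (hM i) hak
    _ ≤ M * (((⌊b / h i⌋₊ : ℝ) - ⌊a / h i⌋₊) * h i) +
        dist (eulerApprox (G i) (h i) c a) p := by gcongr
    _ < M * (b - a) + ρ := by linarith [mem_ball.1 hpi]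

theorem hasDerivWithinAt_of_tendsto_eulerApprox (hM : ∀ i y, ‖G i y‖ ≤ M)
    (hh : Tendsto h l (𝓝[>] 0)) {x : ℝ → E} {T t : ℝ} (ht : t ∈ Icc 0 T)
    (hx : ∀ s ∈ Icc 0 T, Tendsto (fun i => eulerApprox (G i) (h i) c s) l (𝓝 (x s))) {v : E}
    (hG : Tendsto (fun q : ι × E => G q.1 q.2) (l ×ˢ 𝓝 (x t)) (𝓝 v)) :
    HasDerivWithinAt x v (Icc 0 T) t := by
  have hM₀ : 0 ≤ M := by
    obtain ⟨i⟩ := l.nonempty_of_neBot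
    exact (norm_nonneg _).trans (hM i c)
  refine hasDerivWithinAt_of_straddle ht fun ε hε => ?_
  obtain ⟨r, hr, hGr⟩ : ∃ r > 0, ∀ᶠ i in l, ∀ y ∈ ball (x t) r, ‖G i y - v‖ ≤ ε := by
    obtain ⟨A, hA, B, hB, hAB⟩ := eventually_prod_iff.1 (hG.eventually (closedBall_mem_nhds v hε))
    obtain ⟨r, hr, hrB⟩ := eventually_nhds_iff_ball.1 hB
    exact ⟨r, hr, hA.mono fun i hi y hy => mem_closedBall_iff_norm.1 (hAB hi (hrB y hy))⟩
  obtain ⟨δ, hδ, hMδ⟩ := exists_pos_mul_lt (half_pos hr) (2 * M)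
  refine ⟨δ, hδ, fun a ha b hb hat htb hba => ?_⟩
  have hdist : dist (x a) (x t) ≤ M * (t - a) := by
    rw [dist_eq_norm']
    simpa using norm_sub_sub_smul_le_of_tendsto_eulerApprox (v := 0) hM hh ha.1 hat
      (hx a ha) (hx t ht) one_pos (Eventually.of_forall fun i y _ => by simpa using hM i y)
  have hball : ball (x a) (M * (b - a) + r / 2) ⊆ ball (x t) r := by
    refine ball_subset_ball' ?_
    have hta : M * (t - a) ≤ M * δ := by gcongr; linarith
    have hbaM : M * (b - a) ≤ M * δ := by gcongr
    linarith
  exact norm_sub_sub_smul_le_of_tendsto_eulerApprox hM hh ha.1 (hat.trans htb) (hx a ha) (hx b hb)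
    (half_pos hr) (hGr.mono fun i hi y hy => hi y (hball hy))

end Limit

end EulerScheme

section ProximalPoints

section Normed

variable {E : Type*} [NormedAddCommGroup E] {V : E → ℝ} {s : Set E} {P : ℝ → E → E}

/-- The penalized functional `p ↦ V p + ‖p - x‖² / (2τ)`, whose minimizers are the proximal points
of `x` and whose minimal value is the Moreau envelope of `V` at `x`. -/
noncomputable def moreauObjective (V : E → ℝ) (τ : ℝ) (x p : E) : ℝ :=
  V p + ‖p - x‖ ^ 2 / (2 * τ)

/-- `P` is a selection of the proximal map of `V` constrained to `s`: `P τ x` is one of the possibly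
many proximal points of `x`. The parameter `τ` is arbitrary, but only `0 < τ` is meaningful. -/
structure IsProxSelection (V : E → ℝ) (s : Set E) (P : ℝ → E → E) : Prop where
  mem : ∀ τ x, P τ x ∈ s
  isMinOn : ∀ τ x, IsMinOn (moreauObjective V τ x) s (P τ x)

theorem exists_isProxSelection (hs : IsCompact s) (hne : s.Nonempty) (hV : ContinuousOn V s) :
    ∃ P, IsProxSelection V s P := by
  have hmin (τ : ℝ) (x : E) : ∃ p ∈ s, IsMinOn (moreauObjective V τ x) s p :=
    hs.exists_isMinOn hne (hV.add (by fun_prop))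
  choose P hP using hmin
  exact ⟨P, fun τ x => (hP τ x).1, fun τ x => (hP τ x).2⟩

theorem le_moreauObjective {τ : ℝ} (hτ : 0 ≤ τ) (x p : E) : V p ≤ moreauObjective V τ x p :=
  le_add_of_nonneg_right (by positivity)

namespace IsProxSelection

theorem moreauObjective_le (hP : IsProxSelection V s P) (τ : ℝ) {x : E} (hx : x ∈ s) :
    moreauObjective V τ x (P τ x) ≤ V x := by
  simpa [moreauObjective] using hP.isMinOn τ x hx

theorem norm_sub_sq_le (hP : IsProxSelection V s P) {τ : ℝ} (hτ : 0 < τ) {x : E} (hx : x ∈ s) :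
    ‖P τ x - x‖ ^ 2 ≤ 2 * τ * (V x - V (P τ x)) := by
  rw [← div_le_iff₀' (by positivity), le_sub_iff_add_le']
  exact hP.moreauObjective_le τ hx

theorem tendsto_sub (hP : IsProxSelection V s P) {C : ℝ} (hC : ∀ p ∈ s, ‖V p‖ ≤ C) :
    Tendsto (fun q : ℝ × E => P q.1 q.2 - q.2) (𝓝[>] 0 ×ˢ 𝓟 s) (𝓝 0) := by
  have hbound : Tendsto (fun q : ℝ × E => √(4 * C * q.1)) (𝓝[>] 0 ×ˢ 𝓟 s) (𝓝 0) := by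
    have hsqrt : Tendsto (fun τ : ℝ => √(4 * C * τ)) (𝓝 0) (𝓝 0) :=
      Continuous.tendsto' (by fun_prop) _ _ (by simp)
    exact (hsqrt.mono_left nhdsWithin_le_nhds).comp tendsto_fst
  refine squeeze_zero_norm' (eventually_prod_principal_iff.2 ?_) hbound
  filter_upwards [self_mem_nhdsWithin] with τ hτ x hx
  refine Real.le_sqrt_of_sq_le ((hP.norm_sub_sq_le hτ hx).trans ?_)
  have hosc : V x - V (P τ x) ≤ 2 * C := by
    linarith [(abs_le.1 (hC x hx)).2, (abs_le.1 (hC _ (hP.mem τ x))).1]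
  linarith [mul_le_mul_of_nonneg_left hosc (mul_pos two_pos hτ).le]

theorem tendsto (hP : IsProxSelection V s P) {C : ℝ} (hC : ∀ p ∈ s, ‖V p‖ ≤ C) {x : E}
    (hs : s ∈ 𝓝 x) :
    Tendsto (fun q : ℝ × E => P q.1 q.2) (𝓝[>] 0 ×ˢ 𝓝 x) (𝓝 x) := by
  simpa using ((hP.tendsto_sub hC).mono_left
    (Filter.prod_mono le_rfl (le_principal_iff.2 hs))).add tendsto_snd

theorem eventually_forall_dist_lt (hP : IsProxSelection V s P) {C : ℝ}
    (hC : ∀ p ∈ s, ‖V p‖ ≤ C) {r : ℝ} (hr : 0 < r) :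
    ∀ᶠ τ in 𝓝[>] 0, ∀ x ∈ s, dist (P τ x) x < r := by
  have hball := (hP.tendsto_sub hC).eventually (ball_mem_nhds 0 hr)
  filter_upwards [eventually_prod_principal_iff.1 hball] with τ hτ x hx
  simpa [dist_eq_norm] using hτ x hx

end IsProxSelection

end Normed

variable {E : Type*} [NormedAddCommGroup E] [InnerProductSpace ℝ E] {V : E → ℝ} {s : Set E}
  {P : ℝ → E → E}

theorem moreauObjective_add_smul_le (V : E → ℝ) {τ h : ℝ} (hτ : 0 ≤ τ) (hh : 0 ≤ h) {x y u : E}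
    (hu : 0 ≤ ⟪y - x, u⟫) :
    moreauObjective V τ (x + h • u) y ≤
      moreauObjective V τ x y + h ^ 2 * ‖u‖ ^ 2 / (2 * τ) := by
  have hexpand : ‖y - (x + h • u)‖ ^ 2 = ‖y - x‖ ^ 2 - 2 * (h * ⟪y - x, u⟫) + h ^ 2 * ‖u‖ ^ 2 := by
    rw [← sub_sub, norm_sub_sq_real, inner_smul_right, norm_smul, Real.norm_of_nonneg hh, mul_pow]
  have hsq : ‖y - (x + h • u)‖ ^ 2 ≤ ‖y - x‖ ^ 2 + h ^ 2 * ‖u‖ ^ 2 := by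
    linarith [mul_nonneg hh hu]
  calc V y + ‖y - (x + h • u)‖ ^ 2 / (2 * τ)
      ≤ V y + (‖y - x‖ ^ 2 + h ^ 2 * ‖u‖ ^ 2) / (2 * τ) := by gcongr
    _ = _ := by rw [add_div, ← add_assoc, moreauObjective]

namespace IsProxSelection

theorem moreauObjective_eulerSeq_le (hP : IsProxSelection V s P) {G : E → E} {c : E}
    {τ h M : ℝ} (hτ : 0 ≤ τ) (hh : 0 ≤ h) (hM : ∀ y, ‖G y‖ ≤ M) {j k : ℕ} (hjk : j ≤ k)
    (hG : ∀ i < k, 0 ≤ ⟪P τ (eulerSeq G h c i) - eulerSeq G h c i, G (eulerSeq G h c i)⟫) :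
    moreauObjective V τ (eulerSeq G h c k) (P τ (eulerSeq G h c k)) ≤
      moreauObjective V τ (eulerSeq G h c j) (P τ (eulerSeq G h c j)) +
        ((k : ℝ) - j) * (h ^ 2 * M ^ 2 / (2 * τ)) := by
  induction k, hjk using Nat.le_induction with
  | base => simp
  | succ k _ ih =>
    rw [eulerSeq_succ]
    set X := eulerSeq G h c k
    calc moreauObjective V τ (X + h • G X) (P τ (X + h • G X))
        ≤ moreauObjective V τ (X + h • G X) (P τ X) := hP.isMinOn τ _ (hP.mem τ X)
      _ ≤ moreauObjective V τ X (P τ X) + h ^ 2 * ‖G X‖ ^ 2 / (2 * τ) :=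
        moreauObjective_add_smul_le V hτ hh (hG k k.lt_succ_self)
      _ ≤ moreauObjective V τ X (P τ X) + h ^ 2 * M ^ 2 / (2 * τ) := by gcongr; exact hM X
      _ ≤ _ := by
        push_cast
        linarith [ih fun i hi => hG i (hi.trans k.lt_succ_self)]

theorem le_add_eulerApprox (hP : IsProxSelection V s P) {G : E → E} {c : E} {τ M a b : ℝ}
    (hτ : 0 < τ) (hM : ∀ y, ‖G y‖ ≤ M) (ha : 0 ≤ a) (hab : a ≤ b)
    (hs : closedBall c (M * b) ⊆ s)
    (hG : ∀ x ∈ closedBall c (M * b), 0 ≤ ⟪P τ x - x, G x⟫) :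
    V (P τ (eulerApprox G (τ ^ 2) c b)) ≤
      V (eulerApprox G (τ ^ 2) c a) + b * (M ^ 2 / 2) * τ := by
  have hM₀ : 0 ≤ M := (norm_nonneg _).trans (hM c)
  have hb : 0 ≤ b := ha.trans hab
  have hτ₂ : 0 < τ ^ 2 := by positivity
  have hkb : (⌊b / τ ^ 2⌋₊ : ℝ) * τ ^ 2 ≤ b :=
    (floor_div_mul_le_abs hτ₂ b).trans_eq (abs_of_nonneg hb)
  have hmem (i : ℕ) (hi : i ≤ ⌊b / τ ^ 2⌋₊) : eulerSeq G (τ ^ 2) c i ∈ closedBall c (M * b) := by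
    refine closedBall_subset_closedBall ?_ (eulerSeq_mem_closedBall hτ₂.le hM i)
    gcongr
    exact le_trans (by gcongr) hkb
  have hfloor : ⌊a / τ ^ 2⌋₊ ≤ ⌊b / τ ^ 2⌋₊ := by gcongr
  have herror : ((⌊b / τ ^ 2⌋₊ : ℝ) - ⌊a / τ ^ 2⌋₊) * ((τ ^ 2) ^ 2 * M ^ 2 / (2 * τ)) ≤
      b * (M ^ 2 / 2) * τ := by
    calc _ = ((⌊b / τ ^ 2⌋₊ : ℝ) - ⌊a / τ ^ 2⌋₊) * τ ^ 2 * (M ^ 2 / 2) * τ := by field_simp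
      _ ≤ (⌊b / τ ^ 2⌋₊ : ℝ) * τ ^ 2 * (M ^ 2 / 2) * τ := by
        gcongr
        exact sub_le_self _ (Nat.cast_nonneg _)
      _ ≤ b * (M ^ 2 / 2) * τ := by gcongr
  calc V (P τ (eulerApprox G (τ ^ 2) c b))
      ≤ moreauObjective V τ (eulerApprox G (τ ^ 2) c b) (P τ (eulerApprox G (τ ^ 2) c b)) :=
        le_moreauObjective hτ.le _ _
    _ ≤ moreauObjective V τ (eulerApprox G (τ ^ 2) c a) (P τ (eulerApprox G (τ ^ 2) c a)) +
          ((⌊b / τ ^ 2⌋₊ : ℝ) - ⌊a / τ ^ 2⌋₊) * ((τ ^ 2) ^ 2 * M ^ 2 / (2 * τ)) :=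
        hP.moreauObjective_eulerSeq_le hτ.le hτ₂.le hM hfloor fun i hi => hG _ (hmem i hi.le)
    _ ≤ V (eulerApprox G (τ ^ 2) c a) + b * (M ^ 2 / 2) * τ :=
        add_le_add (hP.moreauObjective_le τ (hs (hmem _ hfloor))) herror

theorem le_of_tendsto_eulerApprox (hP : IsProxSelection V s P) {C : ℝ} (hC : ∀ p ∈ s, ‖V p‖ ≤ C)
    {l : Filter ℝ} [l.NeBot] (hl : l ≤ 𝓝[>] 0) {G : ℝ → E → E} {c p q : E} {M a b : ℝ}
    (hM : ∀ τ y, ‖G τ y‖ ≤ M) (ha : 0 ≤ a) (hab : a ≤ b) (hs : closedBall c (M * b) ⊆ s)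
    (hG : ∀ᶠ τ in l, ∀ x ∈ closedBall c (M * b), 0 ≤ ⟪P τ x - x, G τ x⟫)
    (hp : Tendsto (fun τ => eulerApprox (G τ) (τ ^ 2) c a) l (𝓝 p))
    (hq : Tendsto (fun τ => eulerApprox (G τ) (τ ^ 2) c b) l (𝓝 q))
    (hVp : ContinuousAt V p) (hVq : ContinuousAt V q) (hsq : s ∈ 𝓝 q) : V q ≤ V p := by
  have hproxq : Tendsto (fun τ => P τ (eulerApprox (G τ) (τ ^ 2) c b)) l (𝓝 q) :=
    (hP.tendsto hC hsq).comp (tendsto_id.mono_right hl |>.prodMk hq)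
  have herror : Tendsto (fun τ : ℝ => b * (M ^ 2 / 2) * τ) l (𝓝 0) := by
    simpa using (tendsto_id.mono_left (hl.trans nhdsWithin_le_nhds)).const_mul (b * (M ^ 2 / 2))
  have hlim := (hVp.tendsto.comp hp).add herror
  rw [add_zero] at hlim
  refine le_of_tendsto_of_tendsto (hVq.tendsto.comp hproxq) hlim ?_
  filter_upwards [hl self_mem_nhdsWithin, hG] with τ hτ hGτ
  exact hP.le_add_eulerApprox hτ (hM τ) ha hab hs hGτ

end IsProxSelection

end ProximalPoints

section Viscosity

/-- The pair `(V, F)` is backward weakly increasing in `Ω`: through every point there is a backward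
integral curve of `F` along which `V` is monotone. -/
def IsBackwardWeaklyIncreasing {E : Type*} [NormedAddCommGroup E] [NormedSpace ℝ E]
    (F : E → E) (V : E → ℝ) (Ω : Set E) : Prop :=
  ∀ x₀ ∈ Ω, ∃ ε > (0 : ℝ), ∃ x : ℝ → E,
    x 0 = x₀ ∧ (∀ t ∈ Ioc (-ε) (0 : ℝ), x t ∈ Ω) ∧
    (∀ t ∈ Ioc (-ε) (0 : ℝ), HasDerivWithinAt x (F (x t)) (Ioc (-ε) (0 : ℝ)) t) ∧
    ∀ s t : ℝ, -ε < s → s ≤ t → t ≤ 0 → V (x s) ≤ V (x t)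

variable {E : Type*} [NormedAddCommGroup E] [InnerProductSpace ℝ E] {F : E → E} {V : E → ℝ}
  {Ω : Set E}

/-- `V` is a viscosity supersolution of `F(x)·∇V(x) ≥ 0` in `Ω`. The test functions are `C¹` on the
whole space. -/
def IsViscositySupersolution [CompleteSpace E] (F : E → E) (V : E → ℝ) (Ω : Set E) : Prop :=
  ∀ φ : E → ℝ, ContDiff ℝ 1 φ → ∀ x₀ ∈ Ω,
    IsLocalMinOn (fun x => V x - φ x) Ω x₀ → 0 ≤ ⟪F x₀, gradient φ x₀⟫

theorem nonneg_of_hasDerivWithinAt_of_isLocalMaxOn_Ioc {f : ℝ → ℝ} {f' a b : ℝ} (hab : a < b)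
    (hf : HasDerivWithinAt f f' (Ioc a b) b) (hmax : IsLocalMaxOn f (Ioc a b) b) : 0 ≤ f' := by
  have hmid : (a + b) / 2 ∈ Ioc a b := ⟨by linarith, by linarith⟩
  have hcone : (a + b) / 2 - b ∈ posTangentConeAt (Ioc a b) b :=
    sub_mem_posTangentConeAt_of_segment_subset
      ((convex_Ioc a b).segment_subset ⟨hab, le_rfl⟩ hmid)
  have hle : ((a + b) / 2 - b) * f' ≤ 0 := by
    simpa using hmax.hasFDerivWithinAt_nonpos hf.hasFDerivWithinAt hcone
  exact nonneg_of_mul_nonpos_right hle (by linarith)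

theorem IsBackwardWeaklyIncreasing.isViscositySupersolution [CompleteSpace E]
    (hV : IsBackwardWeaklyIncreasing F V Ω) : IsViscositySupersolution F V Ω := by
  intro φ hφ x₀ hx₀ hmin
  obtain ⟨ε, hε, x, rfl, hxΩ, hx, hVx⟩ := hV x₀ hx₀
  have h₀ : (0 : ℝ) ∈ Ioc (-ε) 0 := ⟨neg_lt_zero.2 hε, le_rfl⟩
  have hφx : HasDerivWithinAt (φ ∘ x) ⟪F (x 0), gradient φ (x 0)⟫ (Ioc (-ε) 0) 0 := by
    rw [real_inner_comm, inner_gradient_left]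
    exact (hφ.differentiable one_ne_zero _).hasFDerivAt.comp_hasDerivWithinAt 0 (hx 0 h₀)
  refine nonneg_of_hasDerivWithinAt_of_isLocalMaxOn_Ioc (neg_lt_zero.2 hε) hφx ?_
  have hxlim : Tendsto x (𝓝[Ioc (-ε) 0] 0) (𝓝[Ω] x 0) :=
    (hx 0 h₀).continuousWithinAt.tendsto_nhdsWithin hxΩ
  filter_upwards [hxlim.eventually hmin, self_mem_nhdsWithin] with s hs hsε
  simp only [Function.comp_apply]
  linarith [hVx s 0 hsε.1 hsε.2 le_rfl]

theorem hasGradientAt_neg_norm_sub_sq_div [CompleteSpace E] (τ : ℝ) (x y : E) :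
    HasGradientAt (fun p => -(‖p - x‖ ^ 2 / (2 * τ))) (τ⁻¹ • (x - y)) y := by
  have hsq : HasFDerivAt (fun p => ‖p - x‖ ^ 2) (2 • innerSL ℝ (y - x)) y := by
    simpa using ((hasFDerivAt_id y).sub_const x).norm_sq
  have hdual : InnerProductSpace.toDual ℝ E (τ⁻¹ • (x - y)) =
      -((2 * τ)⁻¹ • 2 • innerSL ℝ (y - x)) := by
    ext v
    simp only [map_smul, map_sub, smul_apply, sub_apply, neg_apply, smul_eq_mul, mul_inv_rev,
      InnerProductSpace.toDual_apply_apply, coe_innerSL_apply, nsmul_eq_mul, Nat.cast_ofNat]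
    ring
  rw [hasGradientAt_iff_hasFDerivAt, hdual]
  exact (hsq.mul_const (2 * τ)⁻¹).neg

theorem IsViscositySupersolution.inner_sub_nonneg [CompleteSpace E]
    (hV : IsViscositySupersolution F V Ω) {τ : ℝ} (hτ : 0 < τ) {x y : E} (hy : y ∈ Ω)
    (hmin : IsLocalMinOn (moreauObjective V τ x) Ω y) : 0 ≤ ⟪F y, x - y⟫ := by
  have hsmooth : ContDiff ℝ 1 fun p => -(‖p - x‖ ^ 2 / (2 * τ)) :=
    (((contDiff_id.sub contDiff_const).norm_sq ℝ).div_const _).neg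
  have hinner := hV _ hsmooth y hy (by simpa only [sub_neg_eq_add] using! hmin)
  rw [(hasGradientAt_neg_norm_sub_sq_div τ x y).gradient, inner_smul_right] at hinner
  exact nonneg_of_mul_nonneg_right hinner (inv_pos.2 hτ)

theorem IsViscositySupersolution.eventually_inner_nonneg [CompleteSpace E]
    (hV : IsViscositySupersolution F V Ω) {s : Set E} (hs : s ⊆ Ω) {P : ℝ → E → E}
    (hP : IsProxSelection V s P) {C : ℝ} (hC : ∀ p ∈ s, ‖V p‖ ≤ C) {c : E} {r R : ℝ} (hrR : r < R)
    (hR : ball c R ⊆ s) :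
    ∀ᶠ τ in 𝓝[>] 0, ∀ x ∈ closedBall c r, 0 ≤ ⟪P τ x - x, -F (P τ x)⟫ := by
  filter_upwards [self_mem_nhdsWithin, hP.eventually_forall_dist_lt hC (sub_pos.2 hrR)]
    with τ hτ hdist x hx
  have hxs : x ∈ s := hR (closedBall_subset_ball hrR hx)
  have hPR : P τ x ∈ ball c R := by
    rw [mem_ball]
    linarith [dist_triangle (P τ x) x c, hdist x hxs, mem_closedBall.1 hx]
  have hs_nhds : s ∈ 𝓝 (P τ x) := mem_of_superset (isOpen_ball.mem_nhds hPR) hR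
  have hmin : IsLocalMinOn (moreauObjective V τ x) Ω (P τ x) :=
    ((hP.isMinOn τ x).isLocalMin hs_nhds).on Ω
  have hinner := hV.inner_sub_nonneg hτ (hs (hP.mem τ x)) hmin
  rwa [inner_neg_right, real_inner_comm, ← inner_neg_right, neg_sub]

section FiniteDimensional

variable [FiniteDimensional ℝ E]

theorem IsViscositySupersolution.exists_decreasing_integralCurve
    (hV : IsViscositySupersolution F V Ω) (hΩ : IsOpen Ω) (hF : ContinuousOn F Ω)
    (hVc : ContinuousOn V Ω) {c : E} (hc : c ∈ Ω) :
    ∃ T > (0 : ℝ), ∃ x : ℝ → E, x 0 = c ∧ (∀ t ∈ Icc 0 T, x t ∈ Ω) ∧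
      (∀ t ∈ Icc 0 T, HasDerivWithinAt x (-F (x t)) (Icc 0 T) t) ∧
      AntitoneOn (V ∘ x) (Icc 0 T) := by
  obtain ⟨R, hR, hRΩ⟩ := nhds_basis_closedBall.mem_iff.1 (hΩ.mem_nhds hc)
  obtain ⟨M₀, hM₀⟩ := (isCompact_closedBall c R).exists_bound_of_continuousOn (hF.mono hRΩ)
  obtain ⟨C, hC⟩ := (isCompact_closedBall c R).exists_bound_of_continuousOn (hVc.mono hRΩ)
  obtain ⟨P, hP⟩ := exists_isProxSelection (isCompact_closedBall c R)
    (nonempty_closedBall.2 hR.le) (hVc.mono hRΩ)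
  obtain ⟨T, hT, hTR⟩ := exists_pos_mul_lt hR M₀
  set G : ℝ → E → E := fun τ y => -F (P τ y)
  have hGM (τ : ℝ) (y : E) : ‖G τ y‖ ≤ M₀ := (norm_neg _).trans_le (hM₀ _ (hP.mem τ y))
  have hM₀' : 0 ≤ M₀ := (norm_nonneg _).trans (hGM 0 c)
  set U : Ultrafilter ℝ := .of (𝓝[>] 0)
  have hU : (U : Filter ℝ) ≤ 𝓝[>] 0 := Ultrafilter.of_le _
  have hstep : Tendsto (fun τ : ℝ => τ ^ 2) U (𝓝[>] 0) := tendsto_sq_nhdsGT_zero.mono_left hU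
  obtain ⟨x, hxmem, hxlim⟩ := exists_tendsto_eulerApprox (c := c) U hGM
    (hstep.eventually self_mem_nhdsWithin)
  have hxball (t : ℝ) (ht : t ∈ Icc 0 T) : x t ∈ ball c R := by
    refine closedBall_subset_ball ?_ (hxmem t)
    rw [abs_of_nonneg ht.1]
    exact (mul_le_mul_of_nonneg_left ht.2 hM₀').trans_lt hTR
  have hnhds (t : ℝ) (ht : t ∈ Icc 0 T) : closedBall c R ∈ 𝓝 (x t) :=
    closedBall_mem_nhds_of_mem (hxball t ht)
  have hxΩ (t : ℝ) (ht : t ∈ Icc 0 T) : x t ∈ Ω := hRΩ (ball_subset_closedBall (hxball t ht))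
  refine ⟨T, hT, x, by simpa using hxmem 0, hxΩ, fun t ht => ?_, fun a ha b hb hab => ?_⟩
  · have hFt : ContinuousAt F (x t) := hF.continuousAt (hΩ.mem_nhds (hxΩ t ht))
    exact hasDerivWithinAt_of_tendsto_eulerApprox hGM hstep ht (fun s _ => hxlim s)
      ((hFt.tendsto.comp ((hP.tendsto hC (hnhds t ht)).mono_left
        (Filter.prod_mono hU le_rfl))).neg)
  · have hMb : M₀ * b < R := (mul_le_mul_of_nonneg_left hb.2 hM₀').trans_lt hTR
    exact hP.le_of_tendsto_eulerApprox hC hU hGM ha.1 hab (closedBall_subset_closedBall hMb.le)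
      (hU (hV.eventually_inner_nonneg hRΩ hP hC hMb ball_subset_closedBall))
      (hxlim a) (hxlim b) (hVc.continuousAt (hΩ.mem_nhds (hxΩ a ha)))
      (hVc.continuousAt (hΩ.mem_nhds (hxΩ b hb))) (hnhds b hb)

theorem IsViscositySupersolution.isBackwardWeaklyIncreasing
    (hV : IsViscositySupersolution F V Ω) (hΩ : IsOpen Ω) (hF : ContinuousOn F Ω)
    (hVc : ContinuousOn V Ω) : IsBackwardWeaklyIncreasing F V Ω := by
  intro x₀ hx₀
  obtain ⟨T, hT, x, hx0, hxΩ, hx, hVx⟩ := hV.exists_decreasing_integralCurve hΩ hF hVc hx₀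
  have hneg : MapsTo (fun t : ℝ => -t) (Ioc (-T) 0) (Icc 0 T) := fun t ht =>
    ⟨neg_nonneg.2 ht.2, neg_le.2 ht.1.le⟩
  refine ⟨T, hT, fun t => x (-t), by simpa using hx0, fun t ht => hxΩ _ (hneg ht),
    fun t ht => ?_, fun s t hs hst ht => ?_⟩
  · simpa [Function.comp_def] using
      (hx (-t) (hneg ht)).scomp t (hasDerivAt_neg t).hasDerivWithinAt hneg
  · exact hVx (hneg ⟨hs.trans_le hst, ht⟩) (hneg ⟨hs, hst.trans ht⟩) (neg_le_neg hst)

theorem stmt_1_general (hΩ : IsOpen Ω) (hF : ContinuousOn F Ω) (hV : ContinuousOn V Ω) :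
    IsViscositySupersolution F V Ω ↔ IsBackwardWeaklyIncreasing F V Ω :=
  ⟨fun h => h.isBackwardWeaklyIncreasing hΩ hF hV, fun h => h.isViscositySupersolution⟩

end FiniteDimensional

end Viscosity

end

/-- equivalence between being a viscosity supersolution of
`F(x)·∇V(x) ≥ 0` and backward weak monotonicity of `V` along the flow of `F`. -/
theorem stmt_1 {n : ℕ} (Ω : Set (EuclideanSpace ℝ (Fin n))) (hΩ : IsOpen Ω)
    (F : EuclideanSpace ℝ (Fin n) → EuclideanSpace ℝ (Fin n)) (hF : ContinuousOn F Ω)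
    (V : EuclideanSpace ℝ (Fin n) → ℝ) (hV : ContinuousOn V Ω) :
    (∀ φ : EuclideanSpace ℝ (Fin n) → ℝ, ContDiff ℝ 1 φ → ∀ x₀ ∈ Ω,
        IsLocalMinOn (fun x => V x - φ x) Ω x₀ → 0 ≤ ⟪F x₀, gradient φ x₀⟫)
    ↔
    (∀ x₀ ∈ Ω, ∃ ε > (0:ℝ), ∃ x : ℝ → EuclideanSpace ℝ (Fin n),
        x 0 = x₀ ∧ (∀ t ∈ Ioc (-ε) (0:ℝ), x t ∈ Ω) ∧
        (∀ t ∈ Ioc (-ε) (0:ℝ), HasDerivWithinAt x (F (x t)) (Ioc (-ε) (0:ℝ)) t) ∧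
        ∀ s t : ℝ, -ε < s → s ≤ t → t ≤ 0 → V (x s) ≤ V (x t)) :=
  stmt_1_general hΩ hF hV
end

section
/- Let Ω ⊆ ℝⁿ be open and let H : Ω × ℝⁿ → ℝ be continuous with H(x,−p) = H(x,p), with H_p existing and continuous at every (x,p) where H(x,p) > 0, and with H(x,·) positively homogeneous of degree r > 0 for every x ∈ Ω. For U ∈ C¹(Ω) the following are equivalent: (ED) for every x₀ ∈ Ω with H(x₀,∇U(x₀)) > 0 there exists a C¹ solution x_t of ẋ_t = −H_p(x_t,∇U(x_t)), x_0 = x₀ (defined on [0,ε) or (−ε,0]), such that whenever φ is a C² function on [0,ε) or on (−ε,0] for which t ↦ U(x_t) − φ(t) has a minimum at t = 0 and φ'(0) = (d/dt)U(x_t)|_{t=0}, one has −φ''(0) ≥ 0; and: U is a C¹-supersolution of the Aronsson equation. -/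
open Set
open scoped RealInnerProductSpace

/-!
Write `V = H(·, ∇U)` and `F = -H_p(·, ∇U)`. Euler's identity gives `⟪∇U, F⟫ = -r V` where `V > 0`,
so `u = U ∘ x` satisfies `u' = -r V(x)` along a trajectory `x` of `F`, and the second-order test for
`u` at time `0` is a sign condition on the growth of `V` along `x`.

If `V - φ` has a local maximum (minimum) at `x 0` and `φ` decreases to first order along `x`, then
`V` decreases along `x` at a definite rate just after (before) time `0`, and a quadratic test
function contradicts the second-order test.

Conversely, a trajectory along which `V` never drops below `V(x 0)` forwards in time is built by an
Euler scheme on the sup-convolution `z ↦ max_w (V w - c|w - z|²)`: at a maximiser `y` the viscosity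
inequality reads `⟪F y, y - z⟫ ≥ 0`, so moving `z` by `h F(y)` lowers the maximum by at most
`c h² |F(y)|²`. With `h = c⁻²` the total loss vanishes as `c → ∞`, and a limit along an ultrafilter
is a trajectory. Reversing time replaces `(F, V)` by `(-F, -V)` and gives the backward half. The
graph of `u` then lies below its tangent line at `0` on both sides, which forces the test.
-/

section

open Filter Metric Topology

/-- The second-order condition in (ED), for the restriction `u = U ∘ x` of `U` to a trajectory and
the prescribed slope `a` at time `0`. Test functions may touch `u` from below on either side of
`0`. -/
def SecondOrderTest (u : ℝ → ℝ) (a : ℝ) : Prop :=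
  ∀ φ : ℝ → ℝ, ContDiff ℝ 2 φ → deriv φ 0 = a →
    (IsLocalMinOn (fun t => u t - φ t) (Ici 0) 0 ∨ IsLocalMinOn (fun t => u t - φ t) (Iic 0) 0) →
    0 ≤ -(deriv (deriv φ) 0)

lemma isLocalMinOn_Ici_of_deriv_nonneg {f : ℝ → ℝ} {a : ℝ} (hf : ContinuousAt f a)
    (hd : ∀ᶠ t in 𝓝[>] a, DifferentiableAt ℝ f t) (h : ∀ᶠ t in 𝓝[>] a, 0 ≤ deriv f t) :
    IsLocalMinOn f (Ici a) a := by
  obtain ⟨b, hab, hb⟩ := (nhdsGT_basis a).eventually_iff.mp (hd.and h)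
  have hmin : IsMinOn f (Ico a b) a := isMinOn_Ico_of_deriv hf hf
    (by rw [Ioo_self]; exact differentiableOn_empty)
    (fun t ht => (hb ht).1.differentiableWithinAt) (by simp) fun t ht => (hb ht).2
  exact mem_of_superset (Ico_mem_nhdsGE hab) hmin

lemma isLocalMinOn_Iic_of_deriv_nonpos {f : ℝ → ℝ} {a : ℝ} (hf : ContinuousAt f a)
    (hd : ∀ᶠ t in 𝓝[<] a, DifferentiableAt ℝ f t) (h : ∀ᶠ t in 𝓝[<] a, deriv f t ≤ 0) :
    IsLocalMinOn f (Iic a) a := by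
  obtain ⟨b, hba, hb⟩ := (nhdsLT_basis a).eventually_iff.mp (hd.and h)
  have hmin : IsMinOn f (Ioc b a) a := isMinOn_Ioc_of_deriv hf hf
    (fun t ht => (hb ht).1.differentiableWithinAt) (by rw [Ioo_self]; exact differentiableOn_empty)
    (fun t ht => (hb ht).2) (by simp)
  exact mem_of_superset (Ioc_mem_nhdsLE hba) hmin

lemma hasDerivAt_linear_add_quadratic (a k t : ℝ) :
    HasDerivAt (fun t => a * t + k * t ^ 2) (a + 2 * k * t) t :=
  (((hasDerivAt_id' t).const_mul a).fun_add ((hasDerivAt_pow 2 t).const_mul k)).congr_deriv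
    (by ring)

lemma deriv_deriv_linear_add_quadratic (a k t : ℝ) :
    deriv (deriv fun t : ℝ => a * t + k * t ^ 2) t = 2 * k := by
  rw [funext fun t => (hasDerivAt_linear_add_quadratic a k t).deriv]
  simp

lemma deriv_deriv_nonpos_of_frequently_le_tangent {φ : ℝ → ℝ} (hφ : ContDiff ℝ 2 φ)
    (h : ∃ᶠ t in 𝓝[≠] 0, φ t ≤ φ 0 + deriv φ 0 * t) : deriv (deriv φ) 0 ≤ 0 := by
  by_contra! hpos
  set a := deriv φ 0
  have hk : 0 < deriv (deriv φ) 0 / 4 := by positivity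
  set k := deriv (deriv φ) 0 / 4
  have hφd : Differentiable ℝ φ := hφ.differentiable two_ne_zero
  have hφ'd : DifferentiableAt ℝ (deriv φ) 0 :=
    hφ.differentiable_deriv_two 0
  have hψ : deriv (fun t => φ t - (a * t + k * t ^ 2)) = fun t => deriv φ t - (a + 2 * k * t) :=
    funext fun t => ((hφd t).hasDerivAt.sub (hasDerivAt_linear_add_quadratic a k t)).deriv
  have hψ' : HasDerivAt (fun t => deriv φ t - (a + 2 * k * t)) (2 * k) 0 :=
    (hφ'd.hasDerivAt.fun_sub (((hasDerivAt_id' 0).const_mul (2 * k)).const_add a)).congr_deriv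
      (by ring)
  have hmin : IsLocalMin (fun t => φ t - (a * t + k * t ^ 2)) 0 :=
    isLocalMin_of_deriv_deriv_pos (by rw [hψ, hψ'.deriv]; positivity) (by simp [hψ, a])
      (hφd.continuous.continuousAt.sub (by fun_prop))
  obtain ⟨t, ht, htmin, ht0⟩ := (h.and_eventually
    ((hmin.filter_mono nhdsWithin_le_nhds).and self_mem_nhdsWithin)).exists
  have : 0 < k * t ^ 2 := mul_pos (by positivity) (sq_pos_of_ne_zero ht0)
  simp only [mul_zero, ne_eq, OfNat.ofNat_ne_zero, not_false_eq_true, zero_pow, add_zero,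
    sub_zero] at htmin
  linarith

namespace SecondOrderTest

lemma nonpos_of_eventually_le_slope {u u' : ℝ → ℝ} {k : ℝ} (h : SecondOrderTest u (u' 0))
    (hu : ∀ᶠ t in 𝓝 0, HasDerivAt u (u' t) t)
    (hk : (∀ᶠ t in 𝓝[>] 0, k ≤ slope u' 0 t) ∨ ∀ᶠ t in 𝓝[<] 0, k ≤ slope u' 0 t) : k ≤ 0 := by
  have hw : ∀ᶠ t in 𝓝 0, HasDerivAt (fun t => u t - (u' 0 * t + k / 2 * t ^ 2))
      (u' t - (u' 0 + 2 * (k / 2) * t)) t :=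
    hu.mono fun t ht => ht.sub (hasDerivAt_linear_add_quadratic _ _ t)
  have hwd := hw.mono fun t ht => ht.differentiableAt
  have htest := h (fun t => u' 0 * t + k / 2 * t ^ 2) (by fun_prop)
    (by simp [(hasDerivAt_linear_add_quadratic _ _ _).deriv])
    (hk.imp
      (fun hk => isLocalMinOn_Ici_of_deriv_nonneg hw.self_of_nhds.continuousAt
        (nhdsWithin_le_nhds hwd) <| by
          filter_upwards [hk, nhdsWithin_le_nhds hw, self_mem_nhdsWithin] with t hkt hwt ht
          rw [slope_def_field, sub_zero, le_div_iff₀ ht] at hkt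
          rw [hwt.deriv]
          linarith)
      (fun hk => isLocalMinOn_Iic_of_deriv_nonpos hw.self_of_nhds.continuousAt
        (nhdsWithin_le_nhds hwd) <| by
          filter_upwards [hk, nhdsWithin_le_nhds hw, self_mem_nhdsWithin] with t hkt hwt ht
          rw [slope_def_field, sub_zero, le_div_iff_of_neg ht] at hkt
          rw [hwt.deriv]
          linarith))
  rw [deriv_deriv_linear_add_quadratic] at htest
  linarith

-- The graph of `u` lies below its tangent line at `0` on both sides.
lemma of_deriv_le {u u' : ℝ → ℝ} (hu : ∀ᶠ t in 𝓝 0, HasDerivAt u (u' t) t)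
    (hleft : ∀ᶠ t in 𝓝[<] 0, u' 0 ≤ u' t) (hright : ∀ᶠ t in 𝓝[>] 0, u' t ≤ u' 0) :
    SecondOrderTest u (u' 0) := by
  intro φ hφ hφ' hmin
  have hw : ∀ᶠ t in 𝓝 0, HasDerivAt (fun t => u t - u' 0 * t) (u' t - u' 0) t :=
    hu.mono fun t ht => (ht.fun_sub ((hasDerivAt_id' t).const_mul _)).congr_deriv (by ring)
  have hmax : IsLocalMax (fun t => u t - u' 0 * t) 0 := by
    refine isLocalMax_of_deriv hw.self_of_nhds.continuousAt
      (nhdsWithin_le_nhds (hw.mono fun t ht => ht.differentiableAt)) ?_ ?_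
    · filter_upwards [nhdsWithin_le_nhds hw, hleft] with t hwt ht
      rwa [hwt.deriv, sub_nonneg]
    · filter_upwards [nhdsWithin_le_nhds hw, hright] with t hwt ht
      rwa [hwt.deriv, sub_nonpos]
  have htangent {s : Set ℝ} (hs : IsLocalMinOn (fun t => u t - φ t) s 0) :
      ∀ᶠ t in 𝓝[s] 0, φ t ≤ φ 0 + deriv φ 0 * t := by
    filter_upwards [hs, nhdsWithin_le_nhds hmax] with t hst hmt
    rw [hφ']
    linarith
  refine neg_nonneg.2 (deriv_deriv_nonpos_of_frequently_le_tangent hφ ?_)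
  rcases hmin with hmin | hmin
  · exact ((htangent hmin).filter_mono
      (nhdsWithin_mono 0 Ioi_subset_Ici_self)).frequently.filter_mono (nhdsGT_le_nhdsNE 0)
  · exact ((htangent hmin).filter_mono
      (nhdsWithin_mono 0 Iio_subset_Iic_self)).frequently.filter_mono (nhdsLT_le_nhdsNE 0)

end SecondOrderTest

section Trajectory

variable {E : Type*} [NormedAddCommGroup E] [InnerProductSpace ℝ E] [CompleteSpace E]

lemma hasDerivAt_comp_of_hasGradientAt {f : E → ℝ} {x : ℝ → E} {f' x' : E} {t : ℝ}
    (hf : HasGradientAt f f' (x t)) (hx : HasDerivAt x x' t) :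
    HasDerivAt (fun t => f (x t)) ⟪f', x'⟫ t :=
  hf.hasFDerivAt.comp_hasDerivAt t hx

lemma SecondOrderTest.inner_gradient_nonneg {u : ℝ → ℝ} {V φ : E → ℝ} {x : ℝ → E} {f : E} {r : ℝ}
    (hr : 0 < r) (h : SecondOrderTest u (-r * V (x 0)))
    (hu : ∀ᶠ t in 𝓝 0, HasDerivAt u (-r * V (x t)) t) (hx : HasDerivAt x f 0)
    (hφ : DifferentiableAt ℝ φ (x 0)) (hV : IsLocalExtr (fun y => V y - φ y) (x 0)) :
    0 ≤ ⟪gradient φ (x 0), f⟫ := by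
  by_contra! hd
  set d := ⟪gradient φ (x 0), f⟫
  have hslope : ∀ᶠ t in 𝓝[≠] 0, slope (fun t => φ (x t)) 0 t < d / 2 :=
    (hasDerivAt_iff_tendsto_slope.1
      (hasDerivAt_comp_of_hasGradientAt hφ.hasGradientAt hx)).eventually_lt_const (by linarith)
  have hxc := hx.continuousAt.tendsto
  have hgrowth : -r * (d / 2) ≤ 0 := by
    refine h.nonpos_of_eventually_le_slope (u' := fun t => -r * V (x t)) hu (hV.symm.imp ?_ ?_)
    · intro hmax
      filter_upwards [nhdsGT_le_nhdsNE 0 hslope, nhdsWithin_le_nhds (hxc.eventually hmax),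
        self_mem_nhdsWithin] with t hφt hVt (ht : 0 < t)
      rw [slope_def_field, sub_zero, div_lt_iff₀ ht] at hφt
      rw [slope_def_field, sub_zero, le_div_iff₀ ht]
      nlinarith
    · intro hmin
      filter_upwards [nhdsLT_le_nhdsNE 0 hslope, nhdsWithin_le_nhds (hxc.eventually hmin),
        self_mem_nhdsWithin] with t hφt hVt (ht : t < 0)
      rw [slope_def_field, sub_zero, div_lt_iff_of_neg ht] at hφt
      rw [slope_def_field, sub_zero, le_div_iff_of_neg ht]
      nlinarith
  nlinarith

end Trajectory

section Euler

variable {E : Type*} [NormedAddCommGroup E] [NormedSpace ℝ E]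

lemma norm_sub_sub_smul_le_of_forall_step {p g : ℕ → E} {h e : ℝ} {v : E} {i j : ℕ} (hh : 0 ≤ h)
    (hp : ∀ k, p (k + 1) = p k + h • g k) (hij : i ≤ j)
    (hg : ∀ k, i ≤ k → k < j → ‖g k - v‖ ≤ e) :
    ‖p j - p i - (h * (j - i : ℝ)) • v‖ ≤ e * (h * (j - i)) := by
  induction j, hij using Nat.le_induction with
  | base => simp
  | succ j hij ih =>
    have hsplit : p (j + 1) - p i - (h * ((j + 1 : ℕ) - i : ℝ)) • v =
        (p j - p i - (h * (j - i : ℝ)) • v) + h • (g j - v) := by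
      rw [hp]
      push_cast
      module
    calc ‖p (j + 1) - p i - (h * ((j + 1 : ℕ) - i : ℝ)) • v‖
        ≤ ‖p j - p i - (h * (j - i : ℝ)) • v‖ + h * ‖g j - v‖ := by
          rw [hsplit, ← norm_smul_of_nonneg hh]
          exact norm_add_le _ _
      _ ≤ e * (h * (j - i)) + h * e := by
          gcongr
          · exact ih fun k hik hkj => hg k hik (by lia)
          · exact hg j hij j.lt_succ_self
      _ = e * (h * ((j + 1 : ℕ) - i)) := by
          push_cast
          ring

lemma dist_le_of_forall_step {p g : ℕ → E} {h M : ℝ} {i j : ℕ} (hh : 0 ≤ h)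
    (hp : ∀ k, p (k + 1) = p k + h • g k) (hij : i ≤ j) (hg : ∀ k, i ≤ k → k < j → ‖g k‖ ≤ M) :
    dist (p j) (p i) ≤ M * (h * (j - i)) := by
  simpa [dist_eq_norm] using norm_sub_sub_smul_le_of_forall_step (v := 0) hh hp hij
    fun k hik hkj => by simpa using hg k hik hkj

lemma hasDerivWithinAt_of_forall_norm_sub_sub_smul_le {x : ℝ → E} {v : E} {s : Set ℝ} {t : ℝ}
    (ht : t ∈ s) (hx : ∀ e > 0, ∃ δ > 0, ∀ a ∈ s, ∀ b ∈ s, a ≤ t → t ≤ b → b - a < δ →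
      ‖x b - x a - (b - a) • v‖ ≤ e * (b - a)) :
    HasDerivWithinAt x v s t := by
  rw [hasDerivWithinAt_iff_isLittleO, Asymptotics.isLittleO_iff]
  intro e he
  obtain ⟨δ, hδ, hxδ⟩ := hx e he
  filter_upwards [self_mem_nhdsWithin, nhdsWithin_le_nhds (ball_mem_nhds t hδ)] with t' ht's ht'
  rw [mem_ball, Real.dist_eq, abs_lt] at ht'
  rcases le_total t t' with htt' | htt'
  · rw [Real.norm_of_nonneg (sub_nonneg.2 htt')]
    exact hxδ t ht t' ht's le_rfl htt' ht'.2
  · have hflip : x t' - x t - (t' - t) • v = -(x t - x t' - (t - t') • v) := by module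
    rw [hflip, norm_neg, Real.norm_of_nonpos (sub_nonpos.2 htt'), neg_sub]
    exact hxδ t' ht's t ht htt' le_rfl (by linarith)

lemma tendsto_mul_natFloor_div {ι : Type*} {l : Filter ι} {h : ι → ℝ}
    (hh : Tendsto h l (𝓝[>] 0)) {t : ℝ} (ht : 0 ≤ t) :
    Tendsto (fun m => h m * ⌊t / h m⌋₊) l (𝓝 t) := by
  refine ((tendsto_nat_floor_mul_div_atTop ht).comp (tendsto_inv_nhdsGT_zero.comp hh)).congr
    fun _ => ?_
  simp only [Function.comp_apply, div_inv_eq_mul, ← div_eq_mul_inv, mul_comm]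

/-- `p` is an explicit Euler scheme of step `h` for the field `G`, up to time `T`, whose `k`-th
velocity is sampled at a point `y k` within distance `η` of `p k`; both sequences stay in `K`. -/
structure IsPerturbedEuler (G : E → E) (K : Set E) (h η T : ℝ) (p y : ℕ → E) : Prop where
  step_pos : 0 < h
  step : ∀ k, p (k + 1) = p k + h • G (y k)
  node_mem : ∀ k : ℕ, k * h ≤ T → p k ∈ K
  sample_mem : ∀ k : ℕ, k * h ≤ T → y k ∈ K
  dist_le : ∀ k : ℕ, k * h ≤ T → dist (y k) (p k) ≤ η

namespace IsPerturbedEuler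

variable {G : E → E} {K : Set E}

section Scheme

variable {h η T M : ℝ} {p y : ℕ → E}

lemma mul_le_of_le (hE : IsPerturbedEuler G K h η T p y) {j k : ℕ} (hkj : k ≤ j)
    (hj : j * h ≤ T) : k * h ≤ T :=
  (mul_le_mul_of_nonneg_right (Nat.cast_le.2 hkj) hE.step_pos.le).trans hj

lemma dist_le_of_mem_Icc (hE : IsPerturbedEuler G K h η T p y) (hM : ∀ y ∈ K, ‖G y‖ ≤ M)
    {i j k l : ℕ} (hk : k ∈ Icc i j) (hl : l ∈ Icc i j) (hj : j * h ≤ T) :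
    dist (p k) (p l) ≤ M * (h * (j - i)) := by
  wlog hlk : l ≤ k generalizing k l
  · rw [dist_comm]
    exact this hl hk (le_of_not_ge hlk)
  have hM₀ : 0 ≤ M := (norm_nonneg _).trans (hM _ (hE.sample_mem j hj))
  have hk' : (k : ℝ) ≤ j := Nat.cast_le.2 hk.2
  have hl' : (i : ℝ) ≤ l := Nat.cast_le.2 hl.1
  refine (dist_le_of_forall_step hE.step_pos.le hE.step hlk fun q _ hqk =>
    hM _ (hE.sample_mem q (hE.mul_le_of_le (hqk.le.trans hk.2) hj))).trans ?_
  have := hE.step_pos.le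
  gcongr

lemma norm_sub_sub_smul_le (hE : IsPerturbedEuler G K h η T p y) (hM : ∀ y ∈ K, ‖G y‖ ≤ M)
    {z : E} {e δ : ℝ} (hG : ∀ y ∈ K, dist y z < δ → ‖G y - G z‖ ≤ e) {i j k : ℕ}
    (hk : k ∈ Icc i j) (hj : j * h ≤ T) (hδ : η + M * (h * (j - i)) + dist (p k) z < δ) :
    ‖p j - p i - (h * (j - i : ℝ)) • G z‖ ≤ e * (h * (j - i)) := by
  refine norm_sub_sub_smul_le_of_forall_step hE.step_pos.le hE.step (hk.1.trans hk.2)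
    fun l hil hlj => hG _ (hE.sample_mem l (hE.mul_le_of_le hlj.le hj)) ?_
  calc dist (y l) z ≤ dist (y l) (p l) + dist (p l) (p k) + dist (p k) z := dist_triangle4 _ _ _ _
    _ ≤ η + M * (h * (j - i)) + dist (p k) z := by
      gcongr
      · exact hE.dist_le l (hE.mul_le_of_le hlj.le hj)
      · exact hE.dist_le_of_mem_Icc hM ⟨hil, hlj.le⟩ hk hj
    _ < δ := hδ

lemma natFloor_div_mul_le (hE : IsPerturbedEuler G K h η T p y) {t : ℝ} (ht : t ∈ Icc 0 T) :
    ⌊t / h⌋₊ * h ≤ T := by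
  rw [← le_div_iff₀ hE.step_pos]
  exact (Nat.floor_le (div_nonneg ht.1 hE.step_pos.le)).trans
    (div_le_div_of_nonneg_right ht.2 hE.step_pos.le)

end Scheme

section Limit

variable {ι : Type*} {𝒰 : Ultrafilter ι} {h η : ι → ℝ} {T : ℝ} {p y : ι → ℕ → E}

lemma exists_tendsto_node (hE : ∀ᶠ m in 𝒰, IsPerturbedEuler G K (h m) (η m) T (p m) (y m))
    (hK : IsCompact K) {t : ℝ} (ht : t ∈ Icc 0 T) :
    ∃ z ∈ K, Tendsto (fun m => p m ⌊t / h m⌋₊) 𝒰 (𝓝 z) :=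
  hK.ultrafilter_le_nhds (𝒰.map fun m => p m ⌊t / h m⌋₊) <| le_principal_iff.2 <|
    hE.mono fun _ hEm => hEm.node_mem _ (hEm.natFloor_div_mul_le ht)

lemma isIntegralCurveOn_of_tendsto
    (hE : ∀ᶠ m in 𝒰, IsPerturbedEuler G K (h m) (η m) T (p m) (y m))
    (hK : IsCompact K) (hG : ContinuousOn G K) (hh : Tendsto h 𝒰 (𝓝 0)) (hη : Tendsto η 𝒰 (𝓝 0))
    {x : ℝ → E} (hxK : ∀ t ∈ Icc 0 T, x t ∈ K)
    (hx : ∀ t ∈ Icc 0 T, Tendsto (fun m => p m ⌊t / h m⌋₊) 𝒰 (𝓝 (x t))) :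
    IsIntegralCurveOn x (fun _ => G) (Icc 0 T) := by
  intro t ht
  refine hasDerivWithinAt_of_forall_norm_sub_sub_smul_le ht fun e he => ?_
  obtain ⟨δ, hδ, hGδ⟩ := Metric.continuousWithinAt_iff.1 (hG (x t) (hxK t ht)) e he
  obtain ⟨M, hM₀, hM⟩ := (hK.image_of_continuousOn hG).isBounded.exists_pos_norm_le
  refine ⟨δ / M, div_pos hδ hM₀, fun a ha b hb hat htb hab => ?_⟩
  have hh' : Tendsto h 𝒰 (𝓝[>] 0) :=
    tendsto_nhdsWithin_iff.2 ⟨hh, hE.mono fun _ hEm => hEm.step_pos⟩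
  have htime : Tendsto (fun m => h m * (⌊b / h m⌋₊ - ⌊a / h m⌋₊ : ℝ)) 𝒰 (𝓝 (b - a)) := by
    simpa only [mul_sub] using
      (tendsto_mul_natFloor_div hh' hb.1).sub (tendsto_mul_natFloor_div hh' ha.1)
  have hclose : ∀ᶠ m in 𝒰, η m + M * (h m * (⌊b / h m⌋₊ - ⌊a / h m⌋₊ : ℝ)) +
      dist (p m ⌊t / h m⌋₊) (x t) < δ := by
    refine ((hη.add (htime.const_mul M)).add
      (tendsto_iff_dist_tendsto_zero.1 (hx t ht))).eventually_lt_const ?_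
    rwa [zero_add, add_zero, ← lt_div_iff₀' hM₀]
  refine le_of_tendsto_of_tendsto (((hx b hb).sub (hx a ha)).sub (htime.smul_const _)).norm
    (htime.const_mul e) ?_
  filter_upwards [hE, hclose] with m hEm hm
  have hfloor {s s' : ℝ} (hss' : s ≤ s') : ⌊s / h m⌋₊ ≤ ⌊s' / h m⌋₊ :=
    Nat.floor_mono (div_le_div_of_nonneg_right hss' hEm.step_pos.le)
  exact hEm.norm_sub_sub_smul_le (fun y hy => hM _ (mem_image_of_mem G hy))
    (fun y hy hyδ => (dist_eq_norm (G y) _ ▸ hGδ hy hyδ).le) ⟨hfloor hat, hfloor htb⟩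
    (hEm.natFloor_div_mul_le hb) hm

theorem exists_isIntegralCurveOn
    (hE : ∀ᶠ m in 𝒰, IsPerturbedEuler G K (h m) (η m) T (p m) (y m))
    (hK : IsCompact K) (hG : ContinuousOn G K) (hh : Tendsto h 𝒰 (𝓝 0))
    (hη : Tendsto η 𝒰 (𝓝 0)) :
    ∃ x : ℝ → E, IsIntegralCurveOn x (fun _ => G) (Icc 0 T) ∧ ∀ t ∈ Icc 0 T, x t ∈ K ∧
      Tendsto (fun m => p m ⌊t / h m⌋₊) 𝒰 (𝓝 (x t)) ∧
      Tendsto (fun m => y m ⌊t / h m⌋₊) 𝒰 (𝓝[K] (x t)) := by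
  choose! x hxK hx using fun t (ht : t ∈ Icc 0 T) => exists_tendsto_node hE hK ht
  refine ⟨x, isIntegralCurveOn_of_tendsto hE hK hG hh hη hxK hx, fun t ht =>
    ⟨hxK t ht, hx t ht, tendsto_nhdsWithin_iff.2 ⟨?_, ?_⟩⟩⟩
  · refine (tendsto_iff_of_dist (squeeze_zero' (.of_forall fun _ => dist_nonneg) ?_ hη)).2 (hx t ht)
    exact hE.mono fun _ hEm => hEm.dist_le _ (hEm.natFloor_div_mul_le ht)
  · exact hE.mono fun _ hEm => hEm.sample_mem _ (hEm.natFloor_div_mul_le ht)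

end Limit

end IsPerturbedEuler

end Euler

section SupConvolution

variable {E : Type*} [NormedAddCommGroup E]

/-- The penalisation `w ↦ V w - c|w - z|²`; its supremum over `w` is the sup-convolution of `V`
at `z`. -/
def quadPenalized (V : E → ℝ) (c : ℝ) (z w : E) : ℝ := V w - c * ‖w - z‖ ^ 2

/-- `Y` selects, for every centre `z`, a point of `K` where the sup-convolution of `V` over `K` is
attained. -/
structure IsSupConvSelection (V : E → ℝ) (K : Set E) (c : ℝ) (Y : E → E) : Prop where
  mem : ∀ z, Y z ∈ K
  isMaxOn : ∀ z, IsMaxOn (quadPenalized V c z) K (Y z)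

lemma exists_isSupConvSelection {V : E → ℝ} {K : Set E} (hK : IsCompact K) (hK₀ : K.Nonempty)
    (hV : ContinuousOn V K) (c : ℝ) : ∃ Y, IsSupConvSelection V K c Y := by
  choose Y hYK hY using fun z => hK.exists_isMaxOn hK₀ (f := quadPenalized V c z)
    (hV.sub (by fun_prop))
  exact ⟨Y, hYK, hY⟩

lemma norm_sub_smul_sq_le [InnerProductSpace ℝ E] {f v : E} {h : ℝ} (hh : 0 ≤ h)
    (hfv : 0 ≤ ⟪f, v⟫) :
    ‖v - h • f‖ ^ 2 ≤ ‖v‖ ^ 2 + h ^ 2 * ‖f‖ ^ 2 := by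
  rw [norm_sub_sq_real, norm_smul, mul_pow, Real.norm_eq_abs, sq_abs, real_inner_smul_right,
    real_inner_comm]
  linarith [mul_nonneg hh hfv]

lemma quadPenalized_sub_le_quadPenalized_add_smul [InnerProductSpace ℝ E] {V : E → ℝ}
    {c h M : ℝ} {f z w : E} (hc : 0 ≤ c) (hh : 0 ≤ h) (hM : ‖f‖ ≤ M)
    (hf : 0 ≤ ⟪f, w - z⟫) :
    quadPenalized V c z w - c * h ^ 2 * M ^ 2 ≤ quadPenalized V c (z + h • f) w := by
  have hnorm : c * ‖w - z - h • f‖ ^ 2 ≤ c * (‖w - z‖ ^ 2 + h ^ 2 * M ^ 2) := by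
    gcongr
    exact (norm_sub_smul_sq_le hh hf).trans (by gcongr)
  rw [quadPenalized, quadPenalized, ← sub_sub]
  linarith

namespace IsSupConvSelection

variable {V : E → ℝ} {K : Set E} {c B : ℝ} {Y : E → E} {z : E}

lemma le_quadPenalized (hY : IsSupConvSelection V K c Y) (hz : z ∈ K) :
    V z ≤ quadPenalized V c z (Y z) := by
  simpa [quadPenalized] using hY.isMaxOn z hz

lemma dist_le_sqrt (hY : IsSupConvSelection V K c Y) (hc : 0 < c) (hB : ∀ w ∈ K, |V w| ≤ B)
    (hz : z ∈ K) : dist (Y z) z ≤ √(2 * B / c) := by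
  have hVz := hY.le_quadPenalized hz
  rw [quadPenalized] at hVz
  rw [dist_eq_norm]
  refine Real.le_sqrt_of_sq_le ((le_div_iff₀' hc).2 ?_)
  linarith [neg_le_of_abs_le (hB z hz), le_of_abs_le (hB _ (hY.mem z))]

lemma sub_le_quadPenalized_of_step [InnerProductSpace ℝ E] (hY : IsSupConvSelection V K c Y)
    {F : E → E} {p : ℕ → E} {h M : ℝ} (hc : 0 ≤ c) (hh : 0 ≤ h) (hM : ∀ w ∈ K, ‖F w‖ ≤ M)
    (hp : ∀ k, p (k + 1) = p k + h • F (Y (p k))) (hp₀ : p 0 ∈ K) (n : ℕ)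
    (hF : ∀ k < n, 0 ≤ ⟪F (Y (p k)), Y (p k) - p k⟫) :
    V (p 0) - c * h ^ 2 * M ^ 2 * n ≤ quadPenalized V c (p n) (Y (p n)) := by
  induction n with
  | zero => simpa using hY.le_quadPenalized hp₀
  | succ n ih =>
    have hstep := quadPenalized_sub_le_quadPenalized_add_smul (V := V) hc hh
      (hM _ (hY.mem (p n))) (hF n n.lt_succ_self)
    have hmax : quadPenalized V c (p (n + 1)) (Y (p n)) ≤ _ := hY.isMaxOn _ (hY.mem (p n))
    rw [← hp] at hstep
    push_cast
    linarith [ih fun k hk => hF k (hk.trans n.lt_succ_self)]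

end IsSupConvSelection

end SupConvolution

section IntegralCurve

variable {E : Type*} [NormedAddCommGroup E] [NormedSpace ℝ E] {γ γ' : ℝ → E} {v : ℝ → E → E}
  {s s' : Set ℝ}

lemma isIntegralCurveOn_of_eqOn (hγ : IsIntegralCurveOn γ v s) (h : EqOn γ' γ s) :
    IsIntegralCurveOn γ' v s := fun t ht => by
  rw [h ht]
  exact (hγ t ht).congr_of_mem h ht

lemma isIntegralCurveOn_union_of_isClosed (hs : IsClosed s) (hs' : IsClosed s')
    (hγ : IsIntegralCurveOn γ v s) (hγ' : IsIntegralCurveOn γ v s') :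
    IsIntegralCurveOn γ v (s ∪ s') := by
  have hextend {s : Set ℝ} (hs : IsClosed s) (hγ : IsIntegralCurveOn γ v s) (t : ℝ) :
      HasDerivWithinAt γ (v t (γ t)) s t := by
    by_cases ht : t ∈ s
    · exact hγ t ht
    · exact HasFDerivWithinAt.of_notMem_closure (hs.closure_eq.symm ▸ ht)
  exact fun t _ => (hextend hs hγ t).union (hextend hs' hγ' t)

end IntegralCurve

section Viscosity

variable {E : Type*} [NormedAddCommGroup E] [InnerProductSpace ℝ E]

lemma hasGradientAt_const_mul_norm_sub_sq [CompleteSpace E] (c : ℝ) (z y : E) :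
    HasGradientAt (fun w => c * ‖w - z‖ ^ 2) ((2 * c) • (y - z)) y := by
  rw [hasGradientAt_iff_hasFDerivAt]
  refine (((hasFDerivAt_id y).sub_const z).norm_sq.const_mul c).congr_fderiv ?_
  ext w
  simp only [id_eq, map_sub, ContinuousLinearMap.comp_id, smul_apply, sub_apply,
    coe_innerSL_apply, nsmul_eq_mul, Nat.cast_ofNat, smul_eq_mul, map_smul,
    InnerProductSpace.toDual_apply_apply]
  ring

/-- Viscosity subsolutions on an open set `D` of the transport equation `-⟪F, ∇V⟫ = 0`.
Supersolutions of `⟪F, ∇V⟫ = 0` are the functions `V` for which `-V` is a subsolution for the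
field `-F`. -/
def IsViscositySubsolution [CompleteSpace E] (F : E → E) (V : E → ℝ) (D : Set E) : Prop :=
  ∀ φ : E → ℝ, ContDiff ℝ 1 φ → ∀ x ∈ D, IsLocalMax (fun y => V y - φ y) x →
    0 ≤ ⟪F x, gradient φ x⟫

namespace IsViscositySubsolution

lemma inner_sub_nonneg_of_isMaxOn [CompleteSpace E] {F : E → E} {V : E → ℝ} {D K : Set E} {c : ℝ}
    {y z : E} (hV : IsViscositySubsolution F V D) (hy : y ∈ D) (hK : K ∈ 𝓝 y) (hc : 0 < c)
    (hmax : IsMaxOn (quadPenalized V c z) K y) : 0 ≤ ⟪F y, y - z⟫ := by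
  have htest := hV (fun w => c * ‖w - z‖ ^ 2)
    (contDiff_const.mul ((contDiff_id.sub contDiff_const).norm_sq ℝ)) y hy (hmax.isLocalMax hK)
  rw [(hasGradientAt_const_mul_norm_sub_sq c z y).gradient, real_inner_smul_right] at htest
  exact nonneg_of_mul_nonneg_right htest (by positivity)

variable [FiniteDimensional ℝ E] {F : E → E} {V : E → ℝ} {D : Set E} {x₀ : E}

lemma exists_isPerturbedEuler {R B M T c h : ℝ} (hV : IsViscositySubsolution F V D)
    (hR : 0 < R) (hRD : closedBall x₀ R ⊆ D) (hVc : ContinuousOn V (closedBall x₀ R))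
    (hB : ∀ w ∈ closedBall x₀ R, |V w| ≤ B) (hM : ∀ w ∈ closedBall x₀ R, ‖F w‖ ≤ M)
    (hT : M * T ≤ R / 2) (hc : 0 < c) (hcB : √(2 * B / c) < R / 2) (hh : 0 < h) :
    ∃ p y, p 0 = x₀ ∧ IsPerturbedEuler F (closedBall x₀ R) h √(2 * B / c) T p y ∧
      ∀ k : ℕ, k * h ≤ T → V x₀ - c * h ^ 2 * M ^ 2 * k ≤ V (y k) := by
  have hx₀ : x₀ ∈ closedBall x₀ R := mem_closedBall_self hR.le
  obtain ⟨Y, hY⟩ := exists_isSupConvSelection (isCompact_closedBall x₀ R) ⟨x₀, hx₀⟩ hVc c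
  let p : ℕ → E := fun k => (fun z => z + h • F (Y z))^[k] x₀
  have hp (k : ℕ) : p (k + 1) = p k + h • F (Y (p k)) := Function.iterate_succ_apply' _ _ _
  have hp_half (k : ℕ) (hk : k * h ≤ T) : dist (p k) x₀ ≤ R / 2 := by
    have hM₀ : 0 ≤ M := (norm_nonneg _).trans (hM x₀ hx₀)
    have hdrift : dist (p k) x₀ ≤ _ :=
      dist_le_of_forall_step hh.le hp k.zero_le fun l _ _ => hM _ (hY.mem (p l))
    rw [Nat.cast_zero, sub_zero, mul_comm h] at hdrift
    exact hdrift.trans ((mul_le_mul_of_nonneg_left hk hM₀).trans hT)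
  have hp_mem (k : ℕ) (hk : k * h ≤ T) : p k ∈ closedBall x₀ R :=
    mem_closedBall.2 ((hp_half k hk).trans (by linarith))
  have hdist (k : ℕ) (hk : k * h ≤ T) : dist (Y (p k)) (p k) ≤ √(2 * B / c) :=
    hY.dist_le_sqrt hc hB (hp_mem k hk)
  have hinner (k : ℕ) (hk : k * h ≤ T) : 0 ≤ ⟪F (Y (p k)), Y (p k) - p k⟫ := by
    have hball : Y (p k) ∈ ball x₀ R := mem_ball.2 <| by
      linarith [dist_triangle (Y (p k)) (p k) x₀, hdist k hk, hp_half k hk]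
    exact hV.inner_sub_nonneg_of_isMaxOn (hRD (hY.mem _))
      (mem_of_superset (isOpen_ball.mem_nhds hball) ball_subset_closedBall) hc (hY.isMaxOn _)
  refine ⟨p, fun k => Y (p k), rfl, ⟨hh, hp, hp_mem, fun k _ => hY.mem _, hdist⟩, fun k hk => ?_⟩
  refine (hY.sub_le_quadPenalized_of_step hc.le hh.le hM hp hx₀ k fun l hl => hinner l ?_).trans
    (sub_le_self _ (by positivity))
  exact (mul_le_mul_of_nonneg_right (Nat.cast_le.2 hl.le) hh.le).trans hk

-- With step `c⁻²` the total loss of `V` up to time `T` is of order `c⁻¹`.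
lemma eventually_exists_isPerturbedEuler {R B M T : ℝ} (hV : IsViscositySubsolution F V D)
    (hR : 0 < R) (hRD : closedBall x₀ R ⊆ D) (hVc : ContinuousOn V (closedBall x₀ R))
    (hB : ∀ w ∈ closedBall x₀ R, |V w| ≤ B) (hM : ∀ w ∈ closedBall x₀ R, ‖F w‖ ≤ M)
    (hT : M * T ≤ R / 2) :
    ∀ᶠ c in atTop, ∃ p y, p 0 = x₀ ∧
      IsPerturbedEuler F (closedBall x₀ R) (c⁻¹ ^ 2) √(2 * B / c) T p y ∧
      ∀ k : ℕ, k * c⁻¹ ^ 2 ≤ T → V x₀ - c⁻¹ * (M ^ 2 * T) ≤ V (y k) := by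
  have hη : Tendsto (fun c => √(2 * B / c)) atTop (𝓝 0) := by
    simpa using (tendsto_const_nhds.div_atTop tendsto_id).sqrt
  filter_upwards [eventually_gt_atTop 0, hη.eventually_lt_const (half_pos hR)] with c hc hηc
  obtain ⟨p, y, hp₀, hpy, hloss⟩ := hV.exists_isPerturbedEuler hR hRD hVc hB hM hT hc hηc
    (pow_pos (inv_pos.2 hc) 2)
  refine ⟨p, y, hp₀, hpy, fun k hk => (sub_le_sub_left ?_ _).trans (hloss k hk)⟩
  calc c * (c⁻¹ ^ 2) ^ 2 * M ^ 2 * k = c⁻¹ * (M ^ 2 * (k * c⁻¹ ^ 2)) := by field_simp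
    _ ≤ c⁻¹ * (M ^ 2 * T) := by gcongr

theorem exists_forward_curve (hV : IsViscositySubsolution F V D) (hD : D ∈ 𝓝 x₀)
    (hVc : ContinuousOn V D) (hFc : ContinuousOn F D) :
    ∃ T > 0, ∃ x : ℝ → E, x 0 = x₀ ∧ IsIntegralCurveOn x (fun _ => F) (Icc 0 T) ∧
      ∀ t ∈ Icc 0 T, x t ∈ D ∧ V x₀ ≤ V (x t) := by
  obtain ⟨R, hR, hRD⟩ := nhds_basis_closedBall.mem_iff.1 hD
  have hK := isCompact_closedBall x₀ R
  have hVK := hVc.mono hRD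
  have hFK := hFc.mono hRD
  obtain ⟨B, hB⟩ := hK.exists_bound_of_continuousOn hVK
  obtain ⟨M, hM₀, hM⟩ := (hK.image_of_continuousOn hFK).isBounded.exists_pos_norm_le
  have hT : 0 < R / 2 / M := by positivity
  obtain ⟨p, hp⟩ := (hV.eventually_exists_isPerturbedEuler hR hRD hVK hB
    (fun w hw => hM _ (mem_image_of_mem F hw)) (mul_div_cancel₀ _ hM₀.ne').le).choice
  obtain ⟨y, hpy⟩ := hp.choice
  let 𝒰 : Ultrafilter ℝ := .of atTop
  have h𝒰 : (𝒰 : Filter ℝ) ≤ atTop := Ultrafilter.of_le _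
  have hinv : Tendsto (fun c : ℝ => c⁻¹) 𝒰 (𝓝 0) := tendsto_inv_atTop_zero.mono_left h𝒰
  replace hpy := hpy.filter_mono h𝒰
  obtain ⟨x, hxF, hx⟩ := IsPerturbedEuler.exists_isIntegralCurveOn (hpy.mono fun _ h => h.2.1) hK
    hFK (by simpa using hinv.pow 2)
    (by simpa [div_eq_mul_inv] using (hinv.const_mul (2 * B)).sqrt)
  refine ⟨R / 2 / M, hT, x, ?_, hxF, fun t ht => ⟨hRD (hx t ht).1, ?_⟩⟩
  · refine tendsto_nhds_unique (hx 0 ⟨le_rfl, hT.le⟩).2.1 (tendsto_const_nhds.congr' ?_)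
    exact hpy.mono fun _ h => by simp [h.1]
  · obtain ⟨hxK, -, hyx⟩ := hx t ht
    refine le_of_tendsto_of_tendsto ?_ ((hVK _ hxK).tendsto.comp hyx)
      (hpy.mono fun _ h => h.2.2 _ (h.2.1.natFloor_div_mul_le ht))
    simpa using tendsto_const_nhds.sub (hinv.mul_const (M ^ 2 * (R / 2 / M)))

theorem exists_backward_curve (hV : IsViscositySubsolution (-F) (-V) D) (hD : D ∈ 𝓝 x₀)
    (hVc : ContinuousOn V D) (hFc : ContinuousOn F D) :
    ∃ T > 0, ∃ x : ℝ → E, x 0 = x₀ ∧ IsIntegralCurveOn x (fun _ => F) (Icc (-T) 0) ∧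
      ∀ t ∈ Icc (-T) 0, x t ∈ D ∧ V (x t) ≤ V x₀ := by
  obtain ⟨T, hT, x, hx₀, hxF, hx⟩ := hV.exists_forward_curve hD hVc.neg hFc.neg
  have hmem {t : ℝ} (ht : t ∈ Icc (-T) 0) : t * -1 ∈ Icc 0 T :=
    ⟨by linarith [ht.2], by linarith [ht.1]⟩
  have hfield : (-1 : ℝ) • (fun _ : ℝ => -F) ∘ (· * (-1 : ℝ)) = fun _ => F := by
    ext
    simp
  refine ⟨T, hT, x ∘ (· * -1), by simp [hx₀], hfield ▸ (hxF.comp_mul (-1)).mono fun t => hmem,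
    fun t ht => ⟨(hx _ (hmem ht)).1, neg_le_neg_iff.1 (hx _ (hmem ht)).2⟩⟩

theorem exists_monotone_trajectory (hsub : IsViscositySubsolution F V D)
    (hsup : IsViscositySubsolution (-F) (-V) D) (hD : D ∈ 𝓝 x₀) (hVc : ContinuousOn V D)
    (hFc : ContinuousOn F D) :
    ∃ ε > 0, ∃ x : ℝ → E, x 0 = x₀ ∧ IsIntegralCurveOn x (fun _ => F) (Ioo (-ε) ε) ∧
      ∀ t ∈ Ioo (-ε) ε, x t ∈ D ∧ (0 ≤ t → V x₀ ≤ V (x t)) ∧ (t ≤ 0 → V (x t) ≤ V x₀) := by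
  obtain ⟨T₁, hT₁, x₁, hx₁₀, hx₁F, hx₁⟩ := hsub.exists_forward_curve hD hVc hFc
  obtain ⟨T₂, hT₂, x₂, hx₂₀, hx₂F, hx₂⟩ := hsup.exists_backward_curve hD hVc hFc
  set x : ℝ → E := fun t => if 0 ≤ t then x₁ t else x₂ t with hx
  have hx₁' : EqOn x x₁ (Icc 0 T₁) := fun t ht => if_pos ht.1
  have hx₂' : EqOn x x₂ (Icc (-T₂) 0) := fun t ht => by
    rcases ht.2.lt_or_eq with h | rfl
    · exact if_neg h.not_ge
    · simp [hx, hx₁₀, hx₂₀]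
  have hxF := isIntegralCurveOn_union_of_isClosed isClosed_Icc isClosed_Icc
    (isIntegralCurveOn_of_eqOn hx₁F hx₁') (isIntegralCurveOn_of_eqOn hx₂F hx₂')
  have hpos {t : ℝ} (ht : t ∈ Ioo (-min T₁ T₂) (min T₁ T₂)) (h : 0 ≤ t) : t ∈ Icc 0 T₁ :=
    ⟨h, ht.2.le.trans (min_le_left _ _)⟩
  have hneg {t : ℝ} (ht : t ∈ Ioo (-min T₁ T₂) (min T₁ T₂)) (h : t ≤ 0) : t ∈ Icc (-T₂) 0 :=
    ⟨(neg_le_neg (min_le_right _ _)).trans ht.1.le, h⟩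
  refine ⟨min T₁ T₂, lt_min hT₁ hT₂, x, by simp [hx, hx₁₀],
    hxF.mono fun t ht => (le_total 0 t).imp (hpos ht) (hneg ht), fun t ht => ⟨?_, ?_, ?_⟩⟩
  · rcases le_total 0 t with h | h
    · exact hx₁' (hpos ht h) ▸ (hx₁ t (hpos ht h)).1
    · exact hx₂' (hneg ht h) ▸ (hx₂ t (hneg ht h)).1
  · exact fun h => hx₁' (hpos ht h) ▸ (hx₁ t (hpos ht h)).2
  · exact fun h => hx₂' (hneg ht h) ▸ (hx₂ t (hneg ht h)).2

end IsViscositySubsolution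

end Viscosity

section Aronsson

lemma setOf_mem_and_pos_mem_nhds {X : Type*} [TopologicalSpace X] {Ω : Set X} {V : X → ℝ} {x : X}
    (hΩ : IsOpen Ω) (hV : ContinuousOn V Ω) (hx : x ∈ Ω) (hpos : 0 < V x) :
    {y ∈ Ω | 0 < V y} ∈ 𝓝 x :=
  (hV.isOpen_inter_preimage hΩ isOpen_Ioi).mem_nhds ⟨hx, hpos⟩

variable {E : Type*} [NormedAddCommGroup E] [InnerProductSpace ℝ E]

lemma inner_eq_mul_of_forall_smul_eq_rpow_mul [CompleteSpace E] {f : E → ℝ} {f' p : E} {r : ℝ}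
    (hf : HasGradientAt f f' p) (hhom : ∀ t : ℝ, 0 < t → f (t • p) = t ^ r * f p) :
    ⟪f', p⟫ = r * f p := by
  have hray : HasDerivAt (fun t : ℝ => f (t • p)) ⟪f', p⟫ 1 :=
    hasDerivAt_comp_of_hasGradientAt (by rwa [one_smul])
      (by simpa using (hasDerivAt_id' (1 : ℝ)).smul_const p)
  have hpow : HasDerivAt (fun t : ℝ => t ^ r * f p) (r * f p) 1 := by
    simpa using (Real.hasDerivAt_rpow_const (p := r) (Or.inl one_ne_zero)).mul_const (f p)
  refine (hray.congr_of_eventuallyEq ?_).unique hpow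
  filter_upwards [lt_mem_nhds one_pos] with t ht using (hhom t ht).symm

lemma continuousOn_gradient_of_contDiffOn [CompleteSpace E] {U : E → ℝ} {Ω : Set E}
    (hΩ : IsOpen Ω) (hU : ContDiffOn ℝ 1 U Ω) : ContinuousOn (gradient U) Ω :=
  (InnerProductSpace.toDual ℝ E).symm.continuous.comp_continuousOn
    (hU.continuousOn_fderiv_of_isOpen hΩ le_rfl)

/-- Property (ED) of `U` on `Ω`, for the value `V = H(·, ∇U)` of the Hamiltonian and the velocity
field `F = -H_p(·, ∇U)`: through each point of `Ω` where `V` is positive passes a trajectory of `F`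
in `Ω`, defined for small times of both signs, along which `U` satisfies the second-order test. -/
def PropertyED [CompleteSpace E] (Ω : Set E) (U V : E → ℝ) (F : E → E) : Prop :=
  ∀ x₀ ∈ Ω, 0 < V x₀ → ∃ ε > 0, ∃ x : ℝ → E, x 0 = x₀ ∧ (∀ t ∈ Ioo (-ε) ε, x t ∈ Ω) ∧
    IsIntegralCurveOn x (fun _ => F) (Ioo (-ε) ε) ∧
    SecondOrderTest (fun t => U (x t)) ⟪gradient U x₀, F x₀⟫

/-- For `V = H(·, ∇U)` and `F = -H_p(·, ∇U)`, this says that `U` is a `C¹`-supersolution on `Ω` of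
the Aronsson equation: where it is positive, `V` is a viscosity subsolution of `-⟪F, ∇V⟫ = 0` and a
viscosity supersolution of `⟪F, ∇V⟫ = 0`. -/
def IsAronssonSupersolution [CompleteSpace E] (Ω : Set E) (V : E → ℝ) (F : E → E) : Prop :=
  (∀ φ : E → ℝ, ContDiff ℝ 1 φ → ∀ x₀ ∈ Ω, 0 < V x₀ →
    IsLocalMaxOn (fun x => V x - φ x) Ω x₀ → -⟪F x₀, gradient φ x₀⟫ ≤ 0) ∧
  (∀ φ : E → ℝ, ContDiff ℝ 1 φ → ∀ x₀ ∈ Ω, 0 < V x₀ →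
    IsLocalMinOn (fun x => V x - φ x) Ω x₀ → 0 ≤ ⟪F x₀, gradient φ x₀⟫)

lemma eventually_hasDerivAt_comp_of_isIntegralCurveAt [CompleteSpace E] {U V : E → ℝ} {F : E → E}
    {D : Set E} {r t₀ : ℝ} {x : ℝ → E} (hx : IsIntegralCurveAt x (fun _ => F) t₀)
    (hD : D ∈ 𝓝 (x t₀)) (hU : ∀ y ∈ D, DifferentiableAt ℝ U y)
    (hUF : ∀ y ∈ D, ⟪gradient U y, F y⟫ = -r * V y) :
    ∀ᶠ t in 𝓝 t₀, HasDerivAt (fun t => U (x t)) (-r * V (x t)) t := by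
  filter_upwards [hx, hx.self_of_nhds.continuousAt.eventually_mem hD] with t hxt htD
  exact hUF _ htD ▸ hasDerivAt_comp_of_hasGradientAt (hU _ htD).hasGradientAt hxt

namespace IsAronssonSupersolution

variable [CompleteSpace E] {Ω : Set E} {V : E → ℝ} {F : E → E}

lemma isViscositySubsolution (h : IsAronssonSupersolution Ω V F) :
    IsViscositySubsolution F V {x ∈ Ω | 0 < V x} := fun φ hφ x hx hmax =>
  neg_nonpos.1 (h.1 φ hφ x hx.1 hx.2 (hmax.on Ω))

lemma isViscositySubsolution_neg (h : IsAronssonSupersolution Ω V F) :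
    IsViscositySubsolution (-F) (-V) {x ∈ Ω | 0 < V x} := by
  intro φ hφ x hx hmax
  have hmin : IsLocalMin (fun y => V y - (-φ) y) x := by
    filter_upwards [hmax] with y hy
    simp only [Pi.neg_apply] at hy ⊢
    linarith
  have hgrad : gradient (-φ) x = -gradient φ x := by rw [gradient, fderiv_neg, map_neg, gradient]
  have htest := h.2 (-φ) hφ.neg x hx.1 hx.2 (hmin.on Ω)
  rwa [hgrad, inner_neg_right, ← inner_neg_left] at htest

end IsAronssonSupersolution

section Equivalence

variable {Ω : Set E} {U V : E → ℝ} {F : E → E} {r : ℝ}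

theorem PropertyED.isAronssonSupersolution [CompleteSpace E] (h : PropertyED Ω U V F)
    (hΩ : IsOpen Ω) (hr : 0 < r) (hU : DifferentiableOn ℝ U Ω) (hV : ContinuousOn V Ω)
    (hUF : ∀ y ∈ {y ∈ Ω | 0 < V y}, ⟪gradient U y, F y⟫ = -r * V y) :
    IsAronssonSupersolution Ω V F := by
  have key (φ : E → ℝ) (hφ : ContDiff ℝ 1 φ) (x₀ : E) (hx₀ : x₀ ∈ Ω) (hpos : 0 < V x₀)
      (hext : IsLocalExtr (fun y => V y - φ y) x₀) : 0 ≤ ⟪F x₀, gradient φ x₀⟫ := by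
    obtain ⟨ε, hε, x, rfl, -, hxF, htest⟩ := h x₀ hx₀ hpos
    have hxF₀ := hxF.isIntegralCurveAt (Ioo_mem_nhds (neg_lt_zero.2 hε) hε)
    rw [hUF _ ⟨hx₀, hpos⟩] at htest
    rw [real_inner_comm]
    exact htest.inner_gradient_nonneg hr
      (eventually_hasDerivAt_comp_of_isIntegralCurveAt hxF₀
        (setOf_mem_and_pos_mem_nhds hΩ hV hx₀ hpos)
        (fun y hy => hU.differentiableAt (hΩ.mem_nhds hy.1)) hUF)
      hxF₀.self_of_nhds (hφ.differentiable one_ne_zero _) hext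
  exact ⟨fun φ hφ x₀ hx₀ hpos hmax => neg_nonpos.2 <|
      key φ hφ x₀ hx₀ hpos (.inr (hmax.isLocalMax (hΩ.mem_nhds hx₀))),
    fun φ hφ x₀ hx₀ hpos hmin => key φ hφ x₀ hx₀ hpos (.inl (hmin.isLocalMin (hΩ.mem_nhds hx₀)))⟩

variable [FiniteDimensional ℝ E]

theorem IsAronssonSupersolution.propertyED (h : IsAronssonSupersolution Ω V F) (hΩ : IsOpen Ω)
    (hr : 0 ≤ r) (hU : DifferentiableOn ℝ U Ω) (hV : ContinuousOn V Ω)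
    (hF : ContinuousOn F {y ∈ Ω | 0 < V y})
    (hUF : ∀ y ∈ {y ∈ Ω | 0 < V y}, ⟪gradient U y, F y⟫ = -r * V y) : PropertyED Ω U V F := by
  intro x₀ hx₀ hpos
  have hD := setOf_mem_and_pos_mem_nhds hΩ hV hx₀ hpos
  obtain ⟨ε, hε, x, rfl, hxF, hx⟩ := h.isViscositySubsolution.exists_monotone_trajectory
    h.isViscositySubsolution_neg hD (hV.mono (sep_subset _ _)) hF
  have hu := eventually_hasDerivAt_comp_of_isIntegralCurveAt
    (hxF.isIntegralCurveAt (Ioo_mem_nhds (neg_lt_zero.2 hε) hε)) hD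
    (fun y hy => hU.differentiableAt (hΩ.mem_nhds hy.1)) hUF
  refine ⟨ε, hε, x, rfl, fun t ht => (hx t ht).1.1, hxF, hUF _ ⟨hx₀, hpos⟩ ▸
    SecondOrderTest.of_deriv_le (u' := fun t => -r * V (x t)) hu ?_ ?_⟩
  · filter_upwards [Ioo_mem_nhdsLT (neg_lt_zero.2 hε)] with t ht
    exact mul_le_mul_of_nonpos_left ((hx t ⟨ht.1, ht.2.trans hε⟩).2.2 ht.2.le) (neg_nonpos.2 hr)
  · filter_upwards [Ioo_mem_nhdsGT hε] with t ht
    exact mul_le_mul_of_nonpos_left ((hx t ⟨(neg_lt_zero.2 hε).trans ht.1, ht.2⟩).2.1 ht.1.le)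
      (neg_nonpos.2 hr)

theorem stmt_4_general (hΩ : IsOpen Ω) {H : E → E → ℝ} {Hp : E → E → E}
    (hHc : ContinuousOn (fun q : E × E => H q.1 q.2) (Ω ×ˢ univ))
    (hHp : ∀ x ∈ Ω, ∀ p, 0 < H x p → HasGradientAt (H x) (Hp x p) p)
    (hHpc : ContinuousOn (fun q : E × E => Hp q.1 q.2) {q | q.1 ∈ Ω ∧ 0 < H q.1 q.2})
    (hr : 0 < r) (hhom : ∀ x ∈ Ω, ∀ p, ∀ t : ℝ, 0 < t → H x (t • p) = t ^ r * H x p)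
    (hU : ContDiffOn ℝ 1 U Ω) :
    PropertyED Ω U (fun x => H x (gradient U x)) (fun x => -(Hp x (gradient U x))) ↔
      IsAronssonSupersolution Ω (fun x => H x (gradient U x))
        (fun x => -(Hp x (gradient U x))) := by
  have hgrad := continuousOn_gradient_of_contDiffOn hΩ hU
  have hdiff := hU.differentiableOn one_ne_zero
  have hV : ContinuousOn (fun x => H x (gradient U x)) Ω :=
    hHc.comp (continuousOn_id.prodMk hgrad) fun x hx => ⟨hx, mem_univ _⟩
  have hF : ContinuousOn (fun x => -(Hp x (gradient U x))) {x ∈ Ω | 0 < H x (gradient U x)} :=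
    (hHpc.comp (continuousOn_id.prodMk (hgrad.mono (sep_subset _ _))) fun x hx => hx).neg
  have hEuler (y : E) (hy : y ∈ {y ∈ Ω | 0 < H y (gradient U y)}) :
      ⟪gradient U y, -(Hp y (gradient U y))⟫ = -r * H y (gradient U y) := by
    rw [inner_neg_right, real_inner_comm, neg_mul,
      inner_eq_mul_of_forall_smul_eq_rpow_mul (hHp y hy.1 _ hy.2) (hhom y hy.1 _)]
  exact ⟨fun h => h.isAronssonSupersolution hΩ hr hdiff hV hEuler,
    fun h => h.propertyED hΩ hr.le hdiff hV hF hEuler⟩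

end Equivalence

end Aronsson

end

/-- for a positively `r`-homogeneous Hamiltonian, property (ED)
(a second-order test condition along a trajectory of the Hamiltonian dynamics)
is equivalent to `U` being a `C¹`-supersolution of the Aronsson equation. -/
theorem stmt_4 {n : ℕ} (Ω : Set (EuclideanSpace ℝ (Fin n))) (hΩ : IsOpen Ω)
    (H : EuclideanSpace ℝ (Fin n) → EuclideanSpace ℝ (Fin n) → ℝ)
    (Hp : EuclideanSpace ℝ (Fin n) → EuclideanSpace ℝ (Fin n) → EuclideanSpace ℝ (Fin n))
    (hHc : ContinuousOn (fun q : EuclideanSpace ℝ (Fin n) × EuclideanSpace ℝ (Fin n) =>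
      H q.1 q.2) (Ω ×ˢ univ))
    (hHsymm : ∀ x ∈ Ω, ∀ p, H x (-p) = H x p)
    (hHp : ∀ x ∈ Ω, ∀ p, 0 < H x p → HasGradientAt (H x) (Hp x p) p)
    (hHpc : ContinuousOn (fun q : EuclideanSpace ℝ (Fin n) × EuclideanSpace ℝ (Fin n) =>
      Hp q.1 q.2) {q | q.1 ∈ Ω ∧ 0 < H q.1 q.2})
    (r : ℝ) (hr : 0 < r)
    (hhom : ∀ x ∈ Ω, ∀ p : EuclideanSpace ℝ (Fin n), ∀ t : ℝ, 0 < t →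
      H x (t • p) = t ^ r * H x p)
    (U : EuclideanSpace ℝ (Fin n) → ℝ) (hU : ContDiffOn ℝ 1 U Ω) :
    -- (ED)
    (∀ x₀ ∈ Ω, 0 < H x₀ (gradient U x₀) →
      ∃ ε > (0:ℝ), ∃ x : ℝ → EuclideanSpace ℝ (Fin n),
        x 0 = x₀ ∧ (∀ t ∈ Ioo (-ε) ε, x t ∈ Ω) ∧
        (∀ t ∈ Ioo (-ε) ε,
          HasDerivWithinAt x (-(Hp (x t) (gradient U (x t)))) (Ioo (-ε) ε) t) ∧
        ∀ φ : ℝ → ℝ, ContDiff ℝ 2 φ →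
          deriv φ 0 = ⟪gradient U x₀, -(Hp x₀ (gradient U x₀))⟫ →
          (IsLocalMinOn (fun t => U (x t) - φ t) (Ici (0:ℝ)) 0 ∨
            IsLocalMinOn (fun t => U (x t) - φ t) (Iic (0:ℝ)) 0) →
          0 ≤ -(deriv (deriv φ) 0))
    ↔
    -- `U` is a `C¹`-supersolution of the Aronsson equation
    ((∀ φ : EuclideanSpace ℝ (Fin n) → ℝ, ContDiff ℝ 1 φ → ∀ x₀ ∈ Ω,
        0 < H x₀ (gradient U x₀) →
        IsLocalMaxOn (fun x => H x (gradient U x) - φ x) Ω x₀ →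
        -⟪-(Hp x₀ (gradient U x₀)), gradient φ x₀⟫ ≤ 0) ∧
     (∀ φ : EuclideanSpace ℝ (Fin n) → ℝ, ContDiff ℝ 1 φ → ∀ x₀ ∈ Ω,
        0 < H x₀ (gradient U x₀) →
        IsLocalMinOn (fun x => H x (gradient U x) - φ x) Ω x₀ →
        0 ≤ ⟪-(Hp x₀ (gradient U x₀)), gradient φ x₀⟫)) :=
  stmt_4_general hΩ hHc hHp hHpc hr hhom hU
end
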